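/- (Calderón–Vaillancourt type L² boundedness.) There exist a constant C > 0 and an integer N ∈ ℕ, depending only on n and f, such that ‖Op^t_ℏ(a)u‖_{L²(ℝⁿ)} ≤ C |a|_{S^0_f, N} ‖u‖_{L²(ℝⁿ)} for all a ∈ S^0_f(ℝ^{2n}), all u ∈ C_c^∞(ℝⁿ), all t ∈ [0,1] and all ℏ ∈ (0,1]. -/

import Mathlib

open MeasureTheory Finset

noncomputable section

/-- Points of `ℝⁿ` (with `n = d + 1`) split as `q = (r, θ) ∈ ℝ × ℝ^d`. -/
abbrev Q (d : ℕ) : Type := ℝ × (Fin d → ℝ)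

/-- The coordinate direction `∂_r`. -/
def eR (d : ℕ) : Q d := ((1 : ℝ), 0)

/-- The coordinate direction `∂_{θ_i}`. -/
def eTh (d : ℕ) (i : Fin d) : Q d := ((0 : ℝ), Pi.single i 1)

/-- Directional derivative of a complex-valued function. -/
def dirD {E : Type*} [NormedAddCommGroup E] [NormedSpace ℝ E]
    (v : E) (g : E → ℂ) : E → ℂ :=
  fun x => fderiv ℝ g x v

/-- Multiindices `α = (α₀, α')` split as in the paper. -/
abbrev MIdx (d : ℕ) : Type := ℕ × (Fin d → ℕ)

/-- `|α| = α₀ + |α'|`. -/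
def deg {d : ℕ} (α : MIdx d) : ℕ := α.1 + ∑ i, α.2 i

/-- `|α'|`, the angular part of a multiindex. -/
def degA {d : ℕ} (α : MIdx d) : ℕ := ∑ i, α.2 i

/-- `∂_q^α` acting on functions on `ℝⁿ = ℝ × ℝ^d`. -/
def mderiv1 {d : ℕ} (α : MIdx d) (g : Q d → ℂ) : Q d → ℂ :=
  (dirD (eR d))^[α.1] <|
    (List.finRange d).foldr (fun i h => (dirD (eTh d i))^[α.2 i] h) g

/-- `∂_q^α ∂_p^β` acting on functions on phase space. -/
def mderiv2 {d : ℕ} (α β : MIdx d) (g : Q d × Q d → ℂ) : Q d × Q d → ℂ :=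
  (dirD ((eR d, 0) : Q d × Q d))^[α.1] <|
  (List.finRange d).foldr (fun i h => (dirD ((eTh d i, 0) : Q d × Q d))^[α.2 i] h) <|
  (dirD (((0 : Q d), eR d) : Q d × Q d))^[β.1] <|
  (List.finRange d).foldr (fun i h => (dirD (((0 : Q d), eTh d i) : Q d × Q d))^[β.2 i] h) g

/-- `∂_q^α ∂_p^β ∂_{q'}^γ` acting on amplitudes `a(q, p, q')`. -/
def mderiv3 {d : ℕ} (α β γ : MIdx d) (g : Q d × Q d × Q d → ℂ) : Q d × Q d × Q d → ℂ :=
  (dirD ((eR d, 0, 0) : Q d × Q d × Q d))^[α.1] <|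
  (List.finRange d).foldr (fun i h => (dirD ((eTh d i, 0, 0) : Q d × Q d × Q d))^[α.2 i] h) <|
  (dirD (((0 : Q d), eR d, 0) : Q d × Q d × Q d))^[β.1] <|
  (List.finRange d).foldr (fun i h => (dirD (((0 : Q d), eTh d i, 0) : Q d × Q d × Q d))^[β.2 i] h) <|
  (dirD (((0 : Q d), (0 : Q d), eR d) : Q d × Q d × Q d))^[γ.1] <|
  (List.finRange d).foldr (fun i h => (dirD (((0 : Q d), (0 : Q d), eTh d i) : Q d × Q d × Q d))^[γ.2 i] h) g

/-- `⟨p⟩ = (1 + ρ² + |η|²)^{1/2}`. -/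
def brP {d : ℕ} (p : Q d) : ℝ := Real.sqrt (1 + p.1 ^ 2 + ∑ i, (p.2 i) ^ 2)

/-- `⟨ρ ⊕ f(r)⁻¹ η⟩` evaluated at a phase-space point. -/
def brF {d : ℕ} (f : ℝ → ℝ) (x : Q d × Q d) : ℝ :=
  Real.sqrt (1 + x.2.1 ^ 2 + ∑ i, (x.2.2 i / f x.1.1) ^ 2)

/-- The standing assumption on `f : ℝ → [1, ∞)`: smooth, `f ≥ 1`, and all derivatives
of `log f` of order `≥ 1` are bounded. -/
def GoodF (f : ℝ → ℝ) : Prop :=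
  ContDiff ℝ (⊤ : ℕ∞) f ∧ (∀ r, 1 ≤ f r) ∧
    ∀ j : ℕ, 1 ≤ j → ∃ C : ℝ, ∀ r, |iteratedDeriv j (fun s => Real.log (f s)) r| ≤ C

/-- Membership in the symbol class `S^m_f(ℝ^{2n})`. -/
def IsSymbol {d : ℕ} (f : ℝ → ℝ) (m : ℝ) (a : Q d × Q d → ℂ) : Prop :=
  ContDiff ℝ (⊤ : ℕ∞) a ∧
    ∀ α β : MIdx d, ∃ C : ℝ, ∀ x : Q d × Q d,
      ‖mderiv2 α β a x‖ ≤ C * f x.1.1 ^ ((degA α : ℝ) - (degA β : ℝ)) * brF f x ^ (m - (deg β : ℝ))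

/-- The finite set of multiindices of length `≤ N`. -/
def idxSet (d N : ℕ) : Finset (MIdx d) :=
  ((Finset.range (N + 1)) ×ˢ Fintype.piFinset fun _ : Fin d => Finset.range (N + 1)).filter
    fun α => deg α ≤ N

/-- The seminorm `|a|_{S^m_f, N}`. -/
def symNorm {d : ℕ} (f : ℝ → ℝ) (m : ℝ) (N : ℕ) (a : Q d × Q d → ℂ) : ℝ :=
  ∑ α ∈ idxSet d N, ∑ β ∈ idxSet d N,
    if deg α + deg β ≤ N then
      ⨆ x : Q d × Q d,
        f x.1.1 ^ (-(degA α : ℝ) + (degA β : ℝ)) * brF f x ^ (-m + (deg β : ℝ)) *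
          ‖mderiv2 α β a x‖
    else 0

/-- `p · q`. -/
def qdot {d : ℕ} (p q : Q d) : ℝ := p.1 * q.1 + ∑ i, p.2 i * q.2 i

/-- The oscillating factor `e^{i p · v / ℏ}`. -/
def ephase {d : ℕ} (ℏ : ℝ) (p v : Q d) : ℂ :=
  Complex.exp (Complex.I * Complex.ofReal (qdot p v) / Complex.ofReal ℏ)

/-- The quantization `Op^t_ℏ(a)` of a symbol, acting on functions (trivialized half-densities). -/
def Op {d : ℕ} (ℏ t : ℝ) (a : Q d × Q d → ℂ) (u : Q d → ℂ) : Q d → ℂ :=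
  fun q => ((2 * Real.pi * ℏ) ^ (d + 1) : ℝ)⁻¹ •
    ∫ p : Q d, ∫ q' : Q d,
      a (t • q + (1 - t) • q', p) * ephase ℏ p (q - q') * u q'

/-- Membership in `C_c^∞(ℝⁿ)`. -/
def IsCc {d : ℕ} (u : Q d → ℂ) : Prop := ContDiff ℝ (⊤ : ℕ∞) u ∧ HasCompactSupport u

/-- The `L²` inner product `⟨w, v⟩ = ∫ w \bar v`. -/
def l2inner {d : ℕ} (w v : Q d → ℂ) : ℂ := ∫ q : Q d, w q * (starRingEnd ℂ) (v q)

/-- The `L²` norm. -/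
def l2norm {d : ℕ} (u : Q d → ℂ) : ℝ := (∫ q : Q d, ‖u q‖ ^ 2) ^ (1 / 2 : ℝ)

/-- `Σ_{|β| ≤ N} sup |∂^β u|`. -/
def ckNorm {d : ℕ} (N : ℕ) (u : Q d → ℂ) : ℝ :=
  ∑ β ∈ idxSet d N, ⨆ q : Q d, ‖mderiv1 β u q‖

/-- `⟨ρ ⊕ f(tr + (1-t)r')⁻¹ η⟩` evaluated at a point `(q, p, q')`. -/
def brFA {d : ℕ} (f : ℝ → ℝ) (t : ℝ) (x : Q d × Q d × Q d) : ℝ :=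
  Real.sqrt (1 + x.2.1.1 ^ 2 + ∑ i, (x.2.1.2 i / f (t * x.1.1 + (1 - t) * x.2.2.1)) ^ 2)

/-- Membership in the amplitude class `BS^m_{f,t}(ℝ^{3n})`. -/
def IsAmp {d : ℕ} (f : ℝ → ℝ) (m t : ℝ) (a : Q d × Q d × Q d → ℂ) : Prop :=
  ContDiff ℝ (⊤ : ℕ∞) a ∧
    ∀ α β γ : MIdx d, ∃ C : ℝ, ∀ x : Q d × Q d × Q d,
      ‖mderiv3 α β γ a x‖ ≤
        C * f (t * x.1.1 + (1 - t) * x.2.2.1) ^ ((degA α : ℝ) - (degA β : ℝ) + (degA γ : ℝ)) *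
          brFA f t x ^ (m - (deg β : ℝ))

/-- The seminorm `|a|_{BS^m_{f,t}, N}`. -/
def ampNorm {d : ℕ} (f : ℝ → ℝ) (m t : ℝ) (N : ℕ) (a : Q d × Q d × Q d → ℂ) : ℝ :=
  ∑ α ∈ idxSet d N, ∑ β ∈ idxSet d N, ∑ γ ∈ idxSet d N,
    if deg α + deg β + deg γ ≤ N then
      ⨆ x : Q d × Q d × Q d,
        f (t * x.1.1 + (1 - t) * x.2.2.1) ^ (-(degA α : ℝ) + (degA β : ℝ) - (degA γ : ℝ)) *
          brFA f t x ^ (-m + (deg β : ℝ)) * ‖mderiv3 α β γ a x‖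
    else 0

/-- The quantization of an amplitude `a(q, p, q')`. -/
def OpAmp {d : ℕ} (ℏ : ℝ) (a : Q d × Q d × Q d → ℂ) (u : Q d → ℂ) : Q d → ℂ :=
  fun q => ((2 * Real.pi * ℏ) ^ (d + 1) : ℝ)⁻¹ •
    ∫ p : Q d, ∫ q' : Q d, a (q, p, q') * ephase ℏ p (q - q') * u q'

/-!
The integral kernel of `Op ℏ t a` is expanded into products of a function of `q` and a function of
`q'`. Convolution with an exponential density inverts `1 + ∂`, so `a` is an average of translates of
derivatives of `a`; with steps of size `f(r)⁻¹` in `θ` and `f(r)` in `η`, these derivatives are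
bounded by a seminorm of `a`. Integrating by parts in `p` gives decay in `q - q'`. The remaining
profile depends on `q` and `q'` only through `t q + (1 - t) q'` and `(q - q') / ℏ`, and in each
coordinate it is `((1 + i x) (1 - i x'))⁻¹` times an absolutely convergent superposition of plane
waves, uniformly in `t` and `ℏ`. Hence `⟨Op ℏ t a u, v⟩` is an integral over phase space of a
bounded amplitude times wave packet coefficients of `u` and `v`. By Plancherel these satisfy an
exact Bessel identity, and the Cauchy–Schwarz inequality gives the `L²` bound for compactly
supported `a`. Multiplying a general symbol by dilated cutoffs keeps its seminorms bounded, and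
Fatou's lemma removes the cutoffs.
-/

namespace CalderonVaillancourt

section Plancherel

open FourierTransform SchwartzMap

theorem eLpNorm_two_sq_eq_lintegral {X : Type*} [MeasurableSpace X] (μ : Measure X) (g : X → ℂ) :
    eLpNorm g 2 μ ^ 2 = ∫⁻ x, ‖g x‖ₑ ^ 2 ∂μ := by
  simpa using eLpNorm_nnreal_pow_eq_lintegral (μ := μ) (f := g) (p := 2) (by norm_num)

variable {V : Type*} [NormedAddCommGroup V] [InnerProductSpace ℝ V] [FiniteDimensional ℝ V]
  [MeasurableSpace V] [BorelSpace V]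

/- Both sides agree as tempered distributions: on test functions this is the self-adjointness of
the Fourier integral. -/
theorem fourier_toLp_ae_eq {φ : V → ℂ} (hφ : Integrable φ) (hφ₂ : MemLp φ 2) :
    (𝓕 (hφ₂.toLp φ) : Lp ℂ 2 (volume : Measure V)) =ᵐ[volume] 𝓕 φ := by
  have hcont : Continuous (𝓕 φ) :=
    VectorFourier.fourierIntegral_continuous Real.continuous_fourierChar (by exact continuous_inner)
      hφ
  refine ae_eq_of_integral_contDiff_smul_eq ((Lp.memLp _).locallyIntegrable (by norm_num))
    hcont.locallyIntegrable fun g hg hgc ↦ ?_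
  have hgc' : HasCompactSupport fun x ↦ (g x : ℂ) :=
    HasCompactSupport.comp_left (g := Complex.ofReal) hgc Complex.ofReal_zero
  let γ : 𝓢(V, ℂ) := hgc'.toSchwartzMap (Complex.ofRealCLM.contDiff.comp hg)
  have hdistr := congrArg (fun T ↦ T γ) (Lp.fourier_toTemperedDistribution_eq (hφ₂.toLp φ))
  simp only [TemperedDistribution.fourier_apply, Lp.toTemperedDistribution_apply] at hdistr
  have hflip := VectorFourier.integral_fourierIntegral_smul_eq_flip (μ := volume) (ν := volume)
    (L := innerₗ V) (g := γ) Real.continuous_fourierChar (by exact continuous_inner)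
    hφ γ.integrable
  calc ∫ x, g x • (𝓕 (hφ₂.toLp φ) : Lp ℂ 2 (volume : Measure V)) x
      = ∫ x, 𝓕 γ x • (hφ₂.toLp φ) x := hdistr.symm
    _ = ∫ x, φ x • 𝓕 γ x := by
        refine integral_congr_ae ?_
        filter_upwards [hφ₂.coeFn_toLp] with x hx
        rw [hx, smul_eq_mul, smul_eq_mul, mul_comm]
    _ = ∫ x, 𝓕 φ x • (g x : ℂ) := by rw [flip_innerₗ] at hflip; exact hflip.symm
    _ = ∫ x, g x • 𝓕 φ x := by simp only [smul_eq_mul, Complex.real_smul, mul_comm]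

theorem lintegral_enorm_fourier_sq {φ : V → ℂ} (hφ : Integrable φ) (hφ₂ : MemLp φ 2) :
    ∫⁻ ξ, ‖𝓕 φ ξ‖ₑ ^ 2 = ∫⁻ x, ‖φ x‖ₑ ^ 2 := by
  have hnorm : eLpNorm (𝓕 φ) 2 volume = eLpNorm φ 2 volume := by
    rw [← eLpNorm_congr_ae (fourier_toLp_ae_eq hφ hφ₂), ← eLpNorm_congr_ae hφ₂.coeFn_toLp,
      ← Lp.enorm_def, ← Lp.enorm_def]
    exact (Lp.fourierTransformₗᵢ V ℂ).enorm_map _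
  rw [← eLpNorm_two_sq_eq_lintegral, ← eLpNorm_two_sq_eq_lintegral, hnorm]

end Plancherel

section Phase

variable {d : ℕ}

theorem qdot_smul_left (c : ℝ) (p q : Q d) : qdot (c • p) q = c * qdot p q := by
  simp [qdot, mul_add, mul_sum, mul_assoc]

theorem qdot_add_left (p p' q : Q d) : qdot (p + p') q = qdot p q + qdot p' q := by
  simp only [qdot, Prod.fst_add, Prod.snd_add, Pi.add_apply, add_mul, sum_add_distrib]
  ring

theorem ephase_eq_exp (ℏ : ℝ) (p q : Q d) :
    ephase ℏ p q = Complex.exp (((qdot p q / ℏ : ℝ) : ℂ) * Complex.I) := by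
  rw [ephase]
  congr 1
  push_cast
  ring

theorem norm_ephase (ℏ : ℝ) (p q : Q d) : ‖ephase ℏ p q‖ = 1 := by
  rw [ephase_eq_exp, Complex.norm_exp_ofReal_mul_I]

@[fun_prop]
theorem continuous_ephase {X : Type*} [TopologicalSpace X] (ℏ : ℝ) {p q : X → Q d}
    (hp : Continuous p) (hq : Continuous q) : Continuous fun x ↦ ephase ℏ (p x) (q x) := by
  unfold ephase qdot
  fun_prop

theorem ephase_sub (ℏ : ℝ) (p q q' : Q d) :
    ephase ℏ p (q - q') = ephase ℏ p q * ephase (-ℏ) p q' := by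
  have hlin : qdot p (q - q') / ℏ = qdot p q / ℏ + qdot p q' / -ℏ := by
    simp only [qdot, Prod.fst_sub, Prod.snd_sub, Pi.sub_apply, mul_sub, sum_sub_distrib]
    ring
  rw [ephase_eq_exp, hlin, ephase_eq_exp, ephase_eq_exp, ← Complex.exp_add]
  push_cast
  ring_nf

instance isAddHaarMeasure_volume : (volume : Measure (Q d)).IsAddHaarMeasure :=
  inferInstanceAs ((volume : Measure ℝ).prod (volume : Measure (Fin d → ℝ))).IsAddHaarMeasure

/-- The identification of `ℝ^{d+1}`, with its Euclidean structure, with the product `ℝ × ℝ^d`,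
which carries the sup norm; it transports the Fourier transform. -/
def euclideanEquiv (d : ℕ) : EuclideanSpace ℝ (Fin (d + 1)) ≃ᵐ Q d :=
  (MeasurableEquiv.toLp 2 (Fin (d + 1) → ℝ)).symm.trans
    (MeasurableEquiv.piFinSuccAbove (fun _ ↦ ℝ) 0)

theorem measurePreserving_euclideanEquiv : MeasurePreserving (euclideanEquiv d) :=
  (volume_preserving_piFinSuccAbove (fun _ ↦ ℝ) 0).comp
    (EuclideanSpace.volume_preserving_symm_measurableEquiv_toLp (Fin (d + 1)))

theorem inner_eq_qdot_euclideanEquiv (x ξ : EuclideanSpace ℝ (Fin (d + 1))) :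
    inner ℝ x ξ = qdot (euclideanEquiv d ξ) (euclideanEquiv d x) := by
  simp [qdot, euclideanEquiv, PiLp.inner_apply, Fin.sum_univ_succ, MeasurableEquiv.piFinSuccAbove,
    Fin.tail]

theorem plancherel_ephase_unit {φ : Q d → ℂ} (hφ : Integrable φ) (hφ₂ : MemLp φ 2) :
    ∫⁻ p : Q d, ‖∫ q, φ q * ephase (-(2 * Real.pi)⁻¹) p q‖ₑ ^ 2 = ∫⁻ q, ‖φ q‖ₑ ^ 2 := by
  have hE := measurePreserving_euclideanEquiv (d := d)
  have hemb := (euclideanEquiv d).measurableEmbedding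
  rw [← hE.lintegral_comp_emb hemb, ← hE.lintegral_comp_emb hemb]
  refine Eq.trans (lintegral_congr fun ξ ↦ ?_) (lintegral_enorm_fourier_sq
    ((hE.integrable_comp_emb hemb).2 hφ) (hφ₂.comp_measurePreserving hE))
  rw [← hE.integral_comp hemb, Real.fourier_eq]
  congr 3
  ext x
  rw [inner_eq_qdot_euclideanEquiv, Circle.smul_def, Real.fourierChar_apply, smul_eq_mul, mul_comm,
    ephase_eq_exp, div_neg, div_inv_eq_mul]
  push_cast
  ring_nf

theorem plancherel_ephase {ℏ : ℝ} (hℏ : ℏ ≠ 0) {φ : Q d → ℂ} (hφ : Integrable φ)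
    (hφ₂ : MemLp φ 2) :
    ∫⁻ p : Q d, ‖∫ q, φ q * ephase ℏ p q‖ₑ ^ 2
      = ENNReal.ofReal ((2 * Real.pi * |ℏ|) ^ (d + 1)) * ∫⁻ q, ‖φ q‖ₑ ^ 2 := by
  have hπ := Real.pi_pos
  set R : ℝ := -(2 * Real.pi * ℏ)⁻¹ with hR
  have hR₀ : R ≠ 0 := by simp [hR, hℏ, hπ.ne']
  have hscale (p q : Q d) : ephase ℏ p q = ephase (-(2 * Real.pi)⁻¹) (R • p) q := by
    rw [ephase_eq_exp, ephase_eq_exp, qdot_smul_left, hR]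
    congr 3
    field_simp
  have hdet : |(R ^ Module.finrank ℝ (Q d))⁻¹| = (2 * Real.pi * |ℏ|) ^ (d + 1) := by
    rw [Module.finrank_prod, Module.finrank_self, Module.finrank_fin_fun, add_comm, hR, abs_inv,
      abs_pow, abs_neg, abs_inv, inv_pow, inv_inv, abs_mul, abs_of_pos (by positivity)]
  rw [← plancherel_ephase_unit hφ hφ₂, ← hdet, ← smul_eq_mul, ← lintegral_smul_measure,
    ← Measure.map_addHaar_smul _ hR₀]
  simp only [hscale]
  exact (lintegral_map_equiv (fun p ↦ ‖∫ q, φ q * ephase (-(2 * Real.pi)⁻¹) p q‖ₑ ^ 2)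
    (Homeomorph.smulOfNeZero R hR₀ (α := Q d)).toMeasurableEquiv).symm

end Phase

section GammaKernel

/-- The density `τ^k e^{-τ} / k!` on the positive half-line. Convolution with it inverts
`(1 + ∂)^{k+1}`, see `integral_gammaKernel_succ_mul`. -/
def gammaKernel (k : ℕ) : ℝ → ℝ :=
  (Set.Ioi 0).indicator fun τ ↦ τ ^ k * Real.exp (-τ) / k.factorial

theorem integrable_gammaKernel (k : ℕ) : Integrable (gammaKernel k) := by
  have hΓ := (Real.GammaIntegral_convergent (s := k + 1) (by positivity)).div_const
    (k.factorial : ℝ)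
  rw [gammaKernel, integrable_indicator_iff measurableSet_Ioi]
  refine IntegrableOn.congr_fun hΓ (fun τ _ ↦ ?_) measurableSet_Ioi
  simp [mul_comm]

theorem continuous_gammaKernel {k : ℕ} (hk : k ≠ 0) : Continuous (gammaKernel k) := by
  have hmax : gammaKernel k = fun τ ↦ max τ 0 ^ k * Real.exp (-τ) / k.factorial := by
    ext τ
    rcases lt_or_ge 0 τ with hτ | hτ
    · rw [gammaKernel, Set.indicator_of_mem (Set.mem_Ioi.2 hτ), max_eq_left hτ.le]
    · rw [gammaKernel, Set.indicator_of_notMem (Set.notMem_Ioi.2 hτ), max_eq_right hτ,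
        zero_pow hk, zero_mul, zero_div]
  rw [hmax]
  fun_prop

theorem mul_gammaKernel (k : ℕ) (τ : ℝ) :
    τ * gammaKernel k τ = (k + 1) * gammaKernel (k + 1) τ := by
  simp only [gammaKernel, Set.indicator_apply, Nat.factorial_succ]
  split_ifs
  · push_cast
    field_simp
    ring
  · ring

theorem integrable_gammaKernel_mul (k : ℕ) {φ : ℝ → ℂ} {C : ℝ} (hφ : Continuous φ)
    (hC : ∀ τ, ‖φ τ‖ ≤ C) : Integrable fun τ ↦ (gammaKernel k τ : ℂ) * φ τ :=
  (integrable_gammaKernel k).ofReal.mul_bdd (c := C) hφ.aestronglyMeasurable (.of_forall hC)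

variable {φ φ' : ℝ → ℂ} {C C' : ℝ}

theorem setIntegral_gammaKernel_mul (k : ℕ) (φ : ℝ → ℂ) :
    ∫ τ, (gammaKernel k τ : ℂ) * φ τ
      = ∫ τ in Set.Ioi (0 : ℝ), ((τ ^ k * Real.exp (-τ) / k.factorial : ℝ) : ℂ) * φ τ := by
  rw [← integral_indicator measurableSet_Ioi]
  congr 1 with τ
  simp only [gammaKernel, Set.indicator_apply]
  split_ifs <;> simp

theorem integrableOn_gammaKernel_mul {k : ℕ} {φ : ℝ → ℂ}
    (h : Integrable fun τ ↦ (gammaKernel k τ : ℂ) * φ τ) :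
    IntegrableOn (fun τ ↦ ((τ ^ k * Real.exp (-τ) / k.factorial : ℝ) : ℂ) * φ τ)
      (Set.Ioi 0) := by
  refine h.integrableOn.congr_fun (fun τ hτ ↦ ?_) measurableSet_Ioi
  simp only [gammaKernel, Set.indicator_of_mem hτ]

theorem tendsto_gammaKernel_mul (k : ℕ) (hC : ∀ τ, ‖φ τ‖ ≤ C) :
    Filter.Tendsto (fun τ : ℝ ↦ ((τ ^ k * Real.exp (-τ) / k.factorial : ℝ) : ℂ) * φ τ)
      Filter.atTop (nhds 0) := by
  have hdecay : Filter.Tendsto (fun τ : ℝ ↦ ((τ ^ k * Real.exp (-τ) / k.factorial : ℝ) : ℂ))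
      Filter.atTop (nhds 0) := by
    have h := (Complex.continuous_ofReal.tendsto _).comp
      ((Real.tendsto_pow_mul_exp_neg_atTop_nhds_zero k).div_const (k.factorial : ℝ))
    rwa [zero_div, Complex.ofReal_zero] at h
  exact hdecay.zero_mul_isBoundedUnder_le (Filter.isBoundedUnder_of ⟨C, hC⟩)

theorem integral_gammaKernel_zero_mul (hφ : ∀ τ, HasDerivAt φ (φ' τ) τ) (hφ' : Continuous φ')
    (hC : ∀ τ, ‖φ τ‖ ≤ C) (hC' : ∀ τ, ‖φ' τ‖ ≤ C') :
    ∫ τ, (gammaKernel 0 τ : ℂ) * (φ τ - φ' τ) = φ 0 := by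
  have hcont : Continuous φ := continuous_iff_continuousAt.2 fun τ ↦ (hφ τ).continuousAt
  have hderiv (τ : ℝ) : HasDerivAt (fun τ ↦ -((τ ^ 0 * Real.exp (-τ) / (0).factorial : ℝ) * φ τ))
      ((τ ^ 0 * Real.exp (-τ) / (0).factorial : ℝ) * (φ τ - φ' τ)) τ := by
    have hexp : HasDerivAt (fun τ : ℝ ↦ Real.exp (-τ)) (-Real.exp (-τ)) τ := by
      simpa using (hasDerivAt_neg τ).exp
    simp only [pow_zero, one_mul, Nat.factorial_zero, Nat.cast_one, div_one]
    refine (hexp.ofReal_comp.mul (hφ τ)).neg.congr_deriv ?_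
    push_cast
    ring
  have hInt := integrable_gammaKernel_mul 0 (hcont.fun_sub hφ')
    fun τ ↦ (norm_sub_le _ _).trans (add_le_add (hC τ) (hC' τ))
  rw [setIntegral_gammaKernel_mul, integral_Ioi_of_hasDerivAt_of_tendsto' (fun τ _ ↦ hderiv τ)
    (integrableOn_gammaKernel_mul hInt) (tendsto_gammaKernel_mul 0 hC).neg]
  simp

theorem integral_gammaKernel_succ_mul (k : ℕ) (hφ : ∀ τ, HasDerivAt φ (φ' τ) τ)
    (hφ' : Continuous φ') (hC : ∀ τ, ‖φ τ‖ ≤ C) (hC' : ∀ τ, ‖φ' τ‖ ≤ C') :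
    ∫ τ, (gammaKernel (k + 1) τ : ℂ) * (φ τ - φ' τ) = ∫ τ, (gammaKernel k τ : ℂ) * φ τ := by
  have hcont : Continuous φ := continuous_iff_continuousAt.2 fun τ ↦ (hφ τ).continuousAt
  have hInt := integrable_gammaKernel_mul (k + 1) (hcont.fun_sub hφ')
    fun τ ↦ (norm_sub_le _ _).trans (add_le_add (hC τ) (hC' τ))
  have hInt' := integrable_gammaKernel_mul k hcont hC
  have hderiv (τ : ℝ) : HasDerivAt
      (fun τ ↦ (τ ^ (k + 1) * Real.exp (-τ) / (k + 1).factorial : ℝ) * φ τ)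
      ((τ ^ k * Real.exp (-τ) / k.factorial : ℝ) * φ τ
        - (τ ^ (k + 1) * Real.exp (-τ) / (k + 1).factorial : ℝ) * (φ τ - φ' τ)) τ := by
    have hexp : HasDerivAt (fun τ : ℝ ↦ Real.exp (-τ)) (-Real.exp (-τ)) τ := by
      simpa using (hasDerivAt_neg τ).exp
    refine ((((hasDerivAt_pow (k + 1) τ).mul hexp).div_const
      ((k + 1).factorial : ℝ)).ofReal_comp.mul (hφ τ)).congr_deriv ?_
    have hk : (k.factorial : ℂ) ≠ 0 := mod_cast k.factorial_ne_zero
    have hk' : (k + 1 : ℂ) ≠ 0 := mod_cast k.succ_ne_zero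
    simp only [Nat.factorial_succ, Pi.mul_apply, Nat.add_sub_cancel]
    push_cast
    field_simp
    ring
  rw [← sub_eq_zero, ← neg_eq_zero, neg_sub, setIntegral_gammaKernel_mul,
    setIntegral_gammaKernel_mul, ← integral_sub (integrableOn_gammaKernel_mul hInt')
      (integrableOn_gammaKernel_mul hInt),
    integral_Ioi_of_hasDerivAt_of_tendsto' (fun τ _ ↦ hderiv τ)
      ((integrableOn_gammaKernel_mul hInt').sub (integrableOn_gammaKernel_mul hInt))
      (tendsto_gammaKernel_mul (k + 1) hC)]
  simp

theorem one_sub_mul_I_ne_zero (x : ℝ) : (1 - x * Complex.I : ℂ) ≠ 0 := fun h ↦ by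
  simpa using congrArg Complex.re h

theorem integral_gammaKernel_mul_exp (k : ℕ) (x : ℝ) :
    ∫ τ : ℝ, (gammaKernel k τ : ℂ) * Complex.exp ((x * τ : ℝ) * Complex.I)
      = ((1 - x * Complex.I) ^ (k + 1))⁻¹ := by
  set φ : ℝ → ℂ := fun τ ↦ Complex.exp ((x * τ : ℝ) * Complex.I)
  have hφ (τ : ℝ) : HasDerivAt φ (x * Complex.I * φ τ) τ := by
    refine ((((hasDerivAt_id' τ).const_mul x).ofReal_comp).mul_const Complex.I).cexp.congr_deriv ?_
    rw [mul_one, mul_comm]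
  have hcont : Continuous fun τ ↦ x * Complex.I * φ τ := by fun_prop
  have hC (τ : ℝ) : ‖φ τ‖ ≤ 1 := (Complex.norm_exp_ofReal_mul_I _).le
  have hC' (τ : ℝ) : ‖x * Complex.I * φ τ‖ ≤ ‖(x * Complex.I : ℂ)‖ * 1 := by
    rw [norm_mul]
    gcongr
    exact hC τ
  have hfactor (j : ℕ) : ∫ τ, (gammaKernel j τ : ℂ) * (φ τ - x * Complex.I * φ τ)
      = (1 - x * Complex.I) * ∫ τ, (gammaKernel j τ : ℂ) * φ τ := by
    rw [← integral_const_mul]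
    congr 1 with τ
    ring
  have hne := one_sub_mul_I_ne_zero x
  induction k with
  | zero =>
    have h := integral_gammaKernel_zero_mul hφ hcont hC hC'
    rw [hfactor] at h
    rw [zero_add, pow_one, ← mul_eq_one_iff_eq_inv₀ hne, mul_comm, h]
    simp [φ]
  | succ k ih =>
    have h := integral_gammaKernel_succ_mul k hφ hcont hC hC'
    rw [hfactor, ih] at h
    rw [pow_succ _ (k + 1), mul_inv, ← h, mul_comm _ (_)⁻¹, inv_mul_cancel_left₀ hne]

end GammaKernel

section Superposition

variable {W W' X X' : Type*} [MeasureSpace W] [MeasureSpace W']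

/-- `φ` is a superposition of the oscillations `e^{i θ(ω, ·)}` with an integrable density of mass
at most `C`. For `θ` a bilinear pairing these are the functions of the Wiener algebra. -/
def IsSuperposition (θ : W → X → ℝ) (C : ℝ) (φ : X → ℂ) : Prop :=
  ∃ c : W → ℂ, Integrable c ∧ ∫ ω, ‖c ω‖ ≤ C ∧
    ∀ x, φ x = ∫ ω, c ω * Complex.exp (θ ω x * Complex.I)

namespace IsSuperposition

variable {θ : W → X → ℝ} {θ' : W' → X' → ℝ} {C C' : ℝ} {φ φ' : X → ℂ} {ψ : X' → ℂ}

theorem mono (h : IsSuperposition θ C φ) (hC : C ≤ C') : IsSuperposition θ C' φ := by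
  obtain ⟨c, hc, hcC, hφ⟩ := h
  exact ⟨c, hc, hcC.trans hC, hφ⟩

theorem congr (h : IsSuperposition θ C φ) (hφ : ∀ x, φ' x = φ x) : IsSuperposition θ C φ' :=
  (funext hφ : φ' = φ) ▸ h

theorem nonneg (h : IsSuperposition θ C φ) : 0 ≤ C := by
  obtain ⟨c, -, hcC, -⟩ := h
  exact (integral_nonneg fun ω ↦ norm_nonneg (c ω)).trans hcC

theorem comp (h : IsSuperposition θ C φ) (g : X' → X) :
    IsSuperposition (fun ω x ↦ θ ω (g x)) C (fun x ↦ φ (g x)) := by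
  obtain ⟨c, hc, hcC, hφ⟩ := h
  exact ⟨c, hc, hcC, fun x ↦ hφ (g x)⟩

theorem const_mul (h : IsSuperposition θ C φ) (a : ℂ) :
    IsSuperposition θ (‖a‖ * C) (fun x ↦ a * φ x) := by
  obtain ⟨c, hc, hcC, hφ⟩ := h
  refine ⟨fun ω ↦ a * c ω, hc.const_mul a, ?_, fun x ↦ ?_⟩
  · simp only [norm_mul, integral_const_mul]
    gcongr
  · simp only [hφ, mul_assoc, integral_const_mul]

theorem const_mul_of_norm_le_one (h : IsSuperposition θ C φ) {a : ℂ} (ha : ‖a‖ ≤ 1) :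
    IsSuperposition θ C (fun x ↦ a * φ x) :=
  (h.const_mul a).mono (mul_le_of_le_one_left h.nonneg ha)

theorem add (hθ : ∀ x, Measurable fun ω ↦ θ ω x) (h : IsSuperposition θ C φ)
    (h' : IsSuperposition θ C' φ') : IsSuperposition θ (C + C') (fun x ↦ φ x + φ' x) := by
  obtain ⟨c, hc, hcC, hφ⟩ := h
  obtain ⟨c', hc', hcC', hφ'⟩ := h'
  have hexp (x : X) {c : W → ℂ} (hc : Integrable c) :
      Integrable fun ω ↦ c ω * Complex.exp (θ ω x * Complex.I) :=
    hc.mul_bdd (c := 1) (by have := hθ x; fun_prop)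
      (.of_forall fun ω ↦ (Complex.norm_exp_ofReal_mul_I _).le)
  refine ⟨fun ω ↦ c ω + c' ω, hc.add hc', ?_, fun x ↦ ?_⟩
  · calc ∫ ω, ‖c ω + c' ω‖ ≤ ∫ ω, (‖c ω‖ + ‖c' ω‖) :=
        integral_mono (hc.add hc').norm (hc.norm.add hc'.norm) fun ω ↦ norm_add_le _ _
      _ ≤ C + C' := by
        rw [integral_add hc.norm hc'.norm]
        exact add_le_add hcC hcC'
  · simp only [hφ, hφ', add_mul, integral_add (hexp x hc) (hexp x hc')]

theorem mul_prod [SFinite (volume : Measure W)] [SFinite (volume : Measure W')]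
    (h : IsSuperposition θ C φ) (h' : IsSuperposition θ' C' ψ) :
    IsSuperposition (fun (ω : W × W') (x : X × X') ↦ θ ω.1 x.1 + θ' ω.2 x.2) (C * C')
      (fun x ↦ φ x.1 * ψ x.2) := by
  obtain ⟨c, hc, hcC, hφ⟩ := id h
  obtain ⟨c', hc', hcC', hψ⟩ := h'
  refine ⟨fun ω ↦ c ω.1 * c' ω.2, hc.mul_prod hc', ?_, fun x ↦ ?_⟩
  · simp only [norm_mul]
    rw [Measure.volume_eq_prod, integral_prod_mul (fun ω ↦ ‖c ω‖) fun ω ↦ ‖c' ω‖]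
    exact mul_le_mul hcC hcC' (by positivity) h.nonneg
  · simp only [hφ, hψ]
    rw [← integral_prod_mul, Measure.volume_eq_prod]
    congr 1 with ω
    rw [Complex.ofReal_add, add_mul, Complex.exp_add]
    ring

theorem prod_pi {ι : Type*} [Fintype ι] {X : ι → Type*} [SigmaFinite (volume : Measure W)]
    {θ : ∀ j, W → X j → ℝ} {φ : ∀ j, X j → ℂ} (h : ∀ j, IsSuperposition (θ j) C (φ j)) :
    IsSuperposition (fun (ω : ι → W) (x : ∀ j, X j) ↦ ∑ j, θ j (ω j) (x j))
      (C ^ Fintype.card ι) (fun x ↦ ∏ j, φ j (x j)) := by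
  choose c hc hcC hφ using h
  refine ⟨fun ω ↦ ∏ j, c j (ω j), Integrable.fintype_prod hc, ?_, fun x ↦ ?_⟩
  · simp only [norm_prod]
    rw [integral_fintype_prod_volume_eq_prod fun j ω ↦ ‖c j ω‖]
    exact (prod_le_prod (fun j _ ↦ by positivity) fun j _ ↦ hcC j).trans_eq (by simp)
  · simp only [hφ]
    rw [← integral_fintype_prod_volume_eq_prod
      fun j ω ↦ c j ω * Complex.exp (θ j ω (x j) * Complex.I)]
    simp only [prod_mul_distrib, Complex.ofReal_sum, sum_mul, Complex.exp_sum]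

end IsSuperposition

theorem isSuperposition_inv_one_sub_pow (k : ℕ) :
    ∃ C, IsSuperposition (fun ω x : ℝ ↦ x * ω) C
      fun x ↦ ((1 - x * Complex.I) ^ (k + 1))⁻¹ :=
  ⟨_, fun τ ↦ gammaKernel k τ, (integrable_gammaKernel k).ofReal, le_rfl,
    fun x ↦ (integral_gammaKernel_mul_exp k x).symm⟩

theorem integrable_inv_one_sub_pow {k : ℕ} (hk : k ≠ 0) :
    Integrable fun x : ℝ ↦ ((1 - x * Complex.I : ℂ) ^ (k + 1))⁻¹ := by
  refine integrable_inv_one_add_sq.mono' (Continuous.aestronglyMeasurable ?_)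
    (.of_forall fun x ↦ ?_)
  · exact Continuous.inv₀ (by fun_prop) fun x ↦ pow_ne_zero _ (one_sub_mul_I_ne_zero x)
  · have hsq : ‖(1 - x * Complex.I : ℂ)‖ ^ 2 = 1 + x ^ 2 := by
      rw [← Complex.normSq_eq_norm_sq, Complex.normSq_apply]
      simp
      ring
    rw [norm_inv, norm_pow, ← hsq]
    refine inv_anti₀ (hsq ▸ by positivity) (pow_le_pow_right₀ ?_ (by lia))
    nlinarith [norm_nonneg (1 - x * Complex.I : ℂ), sq_nonneg x]

open FourierTransform in
theorem isSuperposition_gammaKernel {k : ℕ} (hk : k ≠ 0) :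
    ∃ C, IsSuperposition (fun ω x : ℝ ↦ 2 * Real.pi * (ω * x)) C
      fun x ↦ (gammaKernel k x : ℂ) := by
  have hfourier : 𝓕 (fun τ ↦ (gammaKernel k τ : ℂ))
      = fun ω : ℝ ↦ ((1 - (-2 * Real.pi * ω : ℝ) * Complex.I : ℂ) ^ (k + 1))⁻¹ := by
    ext ω
    rw [← integral_gammaKernel_mul_exp, Real.fourier_real_eq_integral_exp_smul]
    congr 1 with τ
    rw [smul_eq_mul, mul_comm, mul_right_comm (-2 * Real.pi) τ ω]
  have hInt : Integrable (𝓕 fun τ ↦ (gammaKernel k τ : ℂ)) := by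
    rw [hfourier]
    exact (integrable_inv_one_sub_pow hk).comp_mul_left' (by simp [Real.pi_ne_zero])
  have hcont : Continuous fun τ ↦ (gammaKernel k τ : ℂ) :=
    Complex.continuous_ofReal.comp (continuous_gammaKernel hk)
  refine ⟨_, 𝓕 fun τ ↦ (gammaKernel k τ : ℂ), hInt, le_rfl, fun x ↦ ?_⟩
  have hinv := congrFun (hcont.fourierInv_fourier_eq (integrable_gammaKernel k).ofReal hInt) x
  refine hinv.symm.trans ?_
  rw [Real.fourierInv_eq']
  congr 1 with ω
  simp [mul_comm]

theorem isSuperposition_pow_mul_gammaKernel (k : ℕ) :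
    ∃ C, IsSuperposition (fun ω x : ℝ ↦ 2 * Real.pi * (ω * x)) C
      fun x ↦ (x : ℂ) ^ k * gammaKernel 1 x := by
  have hpow (k : ℕ) (x : ℝ) :
      (x : ℂ) ^ k * gammaKernel 1 x = (k + 1).factorial * gammaKernel (k + 1) x := by
    induction k with
    | zero => simp
    | succ k ih =>
      have h := congrArg (Complex.ofReal) (mul_gammaKernel (k + 1) x)
      push_cast at h
      rw [pow_succ', mul_assoc, ih, mul_left_comm, h, Nat.factorial_succ (k + 1)]
      push_cast
      ring
  obtain ⟨C, hC⟩ := isSuperposition_gammaKernel k.succ_ne_zero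
  exact ⟨_, by simpa only [hpow] using hC.const_mul (k + 1).factorial⟩

/- With `u = 1 - i x`, one has `x = i (u - 1)`, so `x^k u⁻³` is a combination of powers of `u⁻¹`. -/
theorem isSuperposition_pow_mul_inv_one_sub_cube {k : ℕ} (hk : k ≤ 2) :
    ∃ C, IsSuperposition (fun ω x : ℝ ↦ x * ω) C
      fun x ↦ (x : ℂ) ^ k * ((1 - x * Complex.I) ^ 3)⁻¹ := by
  obtain ⟨C₁, h₁⟩ := isSuperposition_inv_one_sub_pow 0
  obtain ⟨C₂, h₂⟩ := isSuperposition_inv_one_sub_pow 1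
  obtain ⟨C₃, h₃⟩ := isSuperposition_inv_one_sub_pow 2
  have hθ (x : ℝ) : Measurable fun ω : ℝ ↦ x * ω := by fun_prop
  have hx (x : ℝ) : (x : ℂ) = Complex.I * ((1 - x * Complex.I) - 1) := by
    linear_combination (x : ℂ) * Complex.I_sq
  interval_cases k
  · exact ⟨C₃, by simpa using h₃⟩
  · refine ⟨_, ((h₂.const_mul Complex.I).add hθ (h₃.const_mul (-Complex.I))).congr fun x ↦ ?_⟩
    have hu := one_sub_mul_I_ne_zero x
    set u := (1 - x * Complex.I : ℂ) with hu'
    rw [hx x, ← hu']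
    field_simp
    ring
  · refine ⟨_, (((h₁.const_mul (-1)).add hθ (h₂.const_mul 2)).add hθ
      (h₃.const_mul (-1))).congr fun x ↦ ?_⟩
    have hu := one_sub_mul_I_ne_zero x
    set u := (1 - x * Complex.I : ℂ) with hu'
    rw [hx x, ← hu', mul_pow, Complex.I_sq]
    field_simp
    ring

/-- The phase in `exists_isSuperposition_separated`; it is linear in `x = (x, x')`, so its
exponential is a product of a function of `x` and a function of `x'`. -/
def separatedPhase (t ℏ : ℝ) (ω x : ℝ × ℝ) : ℝ :=
  2 * Real.pi * (ω.1 * (t * x.1 + (1 - t) * x.2)) + (x.1 - x.2) / ℏ * ω.2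

theorem one_add_mul_I_mul_one_sub_mul_I_eq {ℏ : ℝ} (hℏ : ℏ ≠ 0) (t x x' : ℝ) {m σ : ℝ}
    (hm : m = t * x + (1 - t) * x') (hσ : σ = (x - x') / ℏ) :
    (1 + x * Complex.I) * (1 - x' * Complex.I) =
      1 + (m : ℂ) ^ 2 + Complex.I * ℏ * σ + ((1 - 2 * t) * ℏ : ℝ) * (m * σ)
        + (-(t * (1 - t)) * ℏ ^ 2 : ℝ) * (σ : ℂ) ^ 2 := by
  have hx : x = m + (1 - t) * ℏ * σ := by
    rw [hm, hσ]
    field_simp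
    ring
  have hx' : x' = m - t * ℏ * σ := by
    rw [hm, hσ]
    field_simp
    ring
  rw [hx, hx']
  push_cast
  linear_combination (-(m + (1 - t) * ℏ * σ) * (m - t * ℏ * σ) : ℂ) * Complex.I_sq

/- The bound is uniform because the polynomial in `one_add_mul_I_mul_one_sub_mul_I_eq` has
coefficients bounded by one. -/
theorem exists_isSuperposition_separated :
    ∃ C, ∀ t ∈ Set.Icc (0 : ℝ) 1, ∀ ℏ ∈ Set.Ioc (0 : ℝ) 1,
      IsSuperposition (separatedPhase t ℏ) C fun x : ℝ × ℝ ↦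
        (1 + x.1 * Complex.I) * (1 - x.2 * Complex.I) *
          (gammaKernel 1 (t * x.1 + (1 - t) * x.2) *
            ((1 - ((x.1 - x.2) / ℏ : ℝ) * Complex.I) ^ 3)⁻¹) := by
  choose A hA using isSuperposition_pow_mul_gammaKernel
  obtain ⟨B₀, hB₀⟩ := isSuperposition_pow_mul_inv_one_sub_cube (k := 0) (by norm_num)
  obtain ⟨B₁, hB₁⟩ := isSuperposition_pow_mul_inv_one_sub_cube (k := 1) (by norm_num)
  obtain ⟨B₂, hB₂⟩ := isSuperposition_pow_mul_inv_one_sub_cube (k := 2) (by norm_num)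
  refine ⟨A 0 * B₀ + A 2 * B₀ + A 0 * B₁ + A 1 * B₁ + A 0 * B₂, fun t ht ℏ hℏ ↦ ?_⟩
  obtain ⟨ht₀, ht₁⟩ := ht
  obtain ⟨hℏ₀, hℏ₁⟩ := hℏ
  have hθ (x : ℝ × ℝ) : Measurable fun ω : ℝ × ℝ ↦ 2 * Real.pi * (ω.1 * x.1) + x.2 * ω.2 := by
    fun_prop
  have hnorm₁ : ‖Complex.I * ℏ‖ ≤ 1 := by
    simpa [abs_of_pos hℏ₀] using hℏ₁
  have hnorm₂ : ‖(((1 - 2 * t) * ℏ : ℝ) : ℂ)‖ ≤ 1 := by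
    rw [Complex.norm_real, norm_mul, Real.norm_eq_abs, Real.norm_eq_abs, abs_of_pos hℏ₀]
    exact mul_le_one₀ (abs_le.2 ⟨by linarith, by linarith⟩) hℏ₀.le hℏ₁
  have hnorm₃ : ‖((-(t * (1 - t)) * ℏ ^ 2 : ℝ) : ℂ)‖ ≤ 1 := by
    rw [Complex.norm_real, norm_mul, norm_neg, norm_pow, Real.norm_of_nonneg hℏ₀.le,
      Real.norm_of_nonneg (mul_nonneg ht₀ (sub_nonneg.2 ht₁))]
    exact mul_le_one₀ (by nlinarith) (by positivity) (pow_le_one₀ hℏ₀.le hℏ₁)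
  have hsum := ((((hA 0).mul_prod hB₀).add hθ ((hA 2).mul_prod hB₀)).add hθ
    (((hA 0).mul_prod hB₁).const_mul_of_norm_le_one hnorm₁)).add hθ
    (((hA 1).mul_prod hB₁).const_mul_of_norm_le_one hnorm₂) |>.add hθ
    (((hA 0).mul_prod hB₂).const_mul_of_norm_le_one hnorm₃)
  refine (hsum.comp fun x : ℝ × ℝ ↦ (t * x.1 + (1 - t) * x.2, (x.1 - x.2) / ℏ)).congr fun x ↦ ?_
  dsimp only
  rw [one_add_mul_I_mul_one_sub_mul_I_eq hℏ₀.ne' t x.1 x.2 rfl rfl]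
  ring

end Superposition

section Transport

variable {E : Type*} [NormedAddCommGroup E] [NormedSpace ℝ E] {h g : E → ℂ}

theorem contDiff_dirD (hh : ContDiff ℝ (⊤ : ℕ∞) h) (v : E) : ContDiff ℝ (⊤ : ℕ∞) (dirD v h) :=
  (hh.fderiv_right (m := (⊤ : ℕ∞)) (by simp)).clm_apply contDiff_const

theorem hasCompactSupport_dirD (hc : HasCompactSupport h) (v : E) :
    HasCompactSupport (dirD v h) :=
  hc.fderiv_apply ℝ v

theorem dirD_smul (c : ℝ) (v : E) : dirD (c • v) h = fun x ↦ (c : ℂ) * dirD v h x := by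
  ext x
  simp [dirD]

theorem dirD_comm (hh : ContDiff ℝ (⊤ : ℕ∞) h) (v w : E) :
    dirD v (dirD w h) = dirD w (dirD v h) := by
  ext x
  have hsymm : IsSymmSndFDerivAt ℝ h x := hh.contDiffAt.isSymmSndFDerivAt
    (by simpa using WithTop.coe_le_coe.2 (le_top (a := (2 : ℕ∞))))
  have hdiff : DifferentiableAt ℝ (fderiv ℝ h) x :=
    (hh.fderiv_right (m := (⊤ : ℕ∞)) (by simp)).differentiable (by simp) x
  have happly (v w : E) : dirD v (dirD w h) x = fderiv ℝ (fderiv ℝ h) x v w := by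
    unfold dirD
    rw [fderiv_clm_apply hdiff (differentiableAt_const w)]
    simp
  rw [happly, happly, hsymm v w]

/-- The iterated directional derivative of `h` along the vectors of `l`, the head of `l` acting
first. -/
def dirs (l : List E) (h : E → ℂ) : E → ℂ :=
  l.foldl (fun g v ↦ dirD v g) h

/-- The transport operator `1 + ∂_v`, inverted by convolution with the exponential density along
`v` and diagonalized by plane waves. -/
def transport (v : E) (h : E → ℂ) : E → ℂ :=
  fun x ↦ h x + dirD v h x

/-- The composition of the operators `1 + ∂_v` for `v ∈ l`, the head of `l` acting first. -/
def transports (l : List E) (h : E → ℂ) : E → ℂ :=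
  l.foldl (fun g v ↦ transport v g) h

theorem contDiff_dirs (hh : ContDiff ℝ (⊤ : ℕ∞) h) (l : List E) :
    ContDiff ℝ (⊤ : ℕ∞) (dirs l h) := by
  induction l generalizing h with
  | nil => exact hh
  | cons v _ ih => exact ih (contDiff_dirD hh v)

theorem contDiff_transports (hh : ContDiff ℝ (⊤ : ℕ∞) h) (l : List E) :
    ContDiff ℝ (⊤ : ℕ∞) (transports l h) := by
  induction l generalizing h with
  | nil => exact hh
  | cons v _ ih => exact ih (hh.add (contDiff_dirD hh v))

theorem tsupport_dirs_subset (l : List E) (h : E → ℂ) : tsupport (dirs l h) ⊆ tsupport h := by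
  induction l generalizing h with
  | nil => exact subset_rfl
  | cons v l ih => exact (ih _).trans (tsupport_fderiv_apply_subset ℝ v)

theorem hasCompactSupport_dirs (hc : HasCompactSupport h) (l : List E) :
    HasCompactSupport (dirs l h) :=
  hc.mono' ((subset_tsupport _).trans (tsupport_dirs_subset l h))

theorem tsupport_transports_subset (l : List E) (h : E → ℂ) :
    tsupport (transports l h) ⊆ tsupport h := by
  induction l generalizing h with
  | nil => exact subset_rfl
  | cons v l ih =>
    refine (ih _).trans ((tsupport_add h (dirD v h)).trans ?_)
    exact Set.union_subset subset_rfl (tsupport_fderiv_apply_subset ℝ v)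

theorem hasCompactSupport_transports (hc : HasCompactSupport h) (l : List E) :
    HasCompactSupport (transports l h) :=
  hc.mono' ((subset_tsupport _).trans (tsupport_transports_subset l h))

theorem transports_append (l l' : List E) (h : E → ℂ) :
    transports (l ++ l') h = transports l' (transports l h) :=
  List.foldl_append

theorem dirD_add (hh : Differentiable ℝ h) (hg : Differentiable ℝ g) (v : E) :
    dirD v (fun x ↦ h x + g x) = fun x ↦ dirD v h x + dirD v g x := by
  ext x
  simp [dirD, fderiv_fun_add (hh x) (hg x)]

theorem dirD_const_mul (hh : Differentiable ℝ h) (c : ℂ) (v : E) :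
    dirD v (fun x ↦ c * h x) = fun x ↦ c * dirD v h x := by
  ext x
  simp [dirD, fderiv_const_mul (hh x)]

theorem dirD_mul (hh : Differentiable ℝ h) (hg : Differentiable ℝ g) (v : E) :
    dirD v (fun x ↦ h x * g x) = fun x ↦ dirD v h x * g x + h x * dirD v g x := by
  ext x
  simp [dirD, fderiv_fun_mul (hh x) (hg x), mul_comm, add_comm]

theorem dirs_add (hh : ContDiff ℝ (⊤ : ℕ∞) h) (hg : ContDiff ℝ (⊤ : ℕ∞) g) (l : List E) :
    dirs l (fun x ↦ h x + g x) = fun x ↦ dirs l h x + dirs l g x := by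
  induction l generalizing h g with
  | nil => rfl
  | cons v l ih =>
    rw [dirs, List.foldl_cons, dirD_add (hh.differentiable (by simp)) (hg.differentiable (by simp))]
    exact ih (contDiff_dirD hh v) (contDiff_dirD hg v)

theorem dirs_const_mul (hh : ContDiff ℝ (⊤ : ℕ∞) h) (c : ℂ) (l : List E) :
    dirs l (fun x ↦ c * h x) = fun x ↦ c * dirs l h x := by
  induction l generalizing h with
  | nil => rfl
  | cons v l ih =>
    rw [dirs, List.foldl_cons, dirD_const_mul (hh.differentiable (by simp))]
    exact ih (contDiff_dirD hh v)

theorem dirs_map_smul {κ : Type*} (hh : ContDiff ℝ (⊤ : ℕ∞) h) (c : κ → ℝ) (e : κ → E)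
    (l : List κ) :
    dirs (l.map fun k ↦ c k • e k) h = fun x ↦ ((l.map c).prod : ℂ) * dirs (l.map e) h x := by
  induction l generalizing h with
  | nil => simp [dirs]
  | cons k l ih =>
    have hk := contDiff_dirD hh (e k)
    rw [List.map_cons, dirs, List.foldl_cons, dirD_smul]
    refine (ih (contDiff_const.mul hk)).trans ?_
    rw [dirs_const_mul hk]
    simp [dirs, mul_assoc, mul_left_comm]

theorem transports_add (hh : ContDiff ℝ (⊤ : ℕ∞) h) (hg : ContDiff ℝ (⊤ : ℕ∞) g) (l : List E) :
    transports l (fun x ↦ h x + g x) = fun x ↦ transports l h x + transports l g x := by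
  induction l generalizing h g with
  | nil => rfl
  | cons v l ih =>
    have hstep : transport v (fun x ↦ h x + g x) = fun x ↦ transport v h x + transport v g x := by
      ext x
      simp only [transport, dirD_add (hh.differentiable (by simp)) (hg.differentiable (by simp))]
      ring
    exact (congrArg _ hstep).trans (ih (hh.add (contDiff_dirD hh v)) (hg.add (contDiff_dirD hg v)))

theorem transports_eq_sum_dirs (hh : ContDiff ℝ (⊤ : ℕ∞) h) (l : List E) (x : E) :
    transports l h x = (l.sublists'.map fun s ↦ dirs s h x).sum := by
  induction l generalizing h with
  | nil => simp [transports, dirs]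
  | cons v l ih =>
    refine (congrFun (transports_add hh (contDiff_dirD hh v) l) x).trans ?_
    rw [ih hh, ih (contDiff_dirD hh v), List.sublists'_cons, List.map_append, List.sum_append,
      List.map_map]
    rfl

theorem dirs_perm (hh : ContDiff ℝ (⊤ : ℕ∞) h) {l l' : List E} (hl : l.Perm l') :
    dirs l h = dirs l' h := by
  induction hl generalizing h with
  | nil => rfl
  | cons v _ ih => exact ih (contDiff_dirD hh v)
  | swap v w l => exact congrArg (dirs l) (dirD_comm hh v w)
  | trans _ _ ih ih' => exact (ih hh).trans (ih' hh)

end Transport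

section Smoothing

variable {E : Type*} [NormedAddCommGroup E] [NormedSpace ℝ E] {h : E → ℂ}

theorem integral_gammaKernel_one_mul_transports (hh : ContDiff ℝ (⊤ : ℕ∞) h)
    (hc : HasCompactSupport h) (v x : E) :
    ∫ τ : ℝ, (gammaKernel 1 τ : ℂ) * transports [v, v] h (x - τ • v) = h x := by
  have hline {g : E → ℂ} (hg : ContDiff ℝ (⊤ : ℕ∞) g) (τ : ℝ) :
      HasDerivAt (fun τ : ℝ ↦ g (x - τ • v)) (-dirD v g (x - τ • v)) τ := by
    have hx : HasDerivAt (fun τ : ℝ ↦ x - τ • v) (-v) τ := by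
      simpa using ((hasDerivAt_id τ).smul_const v).const_sub x
    have hg' := (hg.differentiable (by simp) (x - τ • v)).hasFDerivAt
    exact (hg'.comp_hasDerivAt τ hx).congr_deriv (map_neg _ _)
  have hcont {g : E → ℂ} (hg : ContDiff ℝ (⊤ : ℕ∞) g) :
      Continuous fun τ : ℝ ↦ -dirD v g (x - τ • v) := by
    have := (contDiff_dirD hg v).continuous
    fun_prop
  have hbound {g : E → ℂ} (hg : ContDiff ℝ (⊤ : ℕ∞) g) (hgc : HasCompactSupport g) :
      ∃ C, ∀ τ : ℝ, ‖g (x - τ • v)‖ ≤ C := by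
    obtain ⟨C, hC⟩ := hgc.exists_bound_of_continuous hg.continuous
    exact ⟨C, fun τ ↦ hC _⟩
  have hbound' {g : E → ℂ} (hg : ContDiff ℝ (⊤ : ℕ∞) g) (hgc : HasCompactSupport g) :
      ∃ C, ∀ τ : ℝ, ‖-dirD v g (x - τ • v)‖ ≤ C := by
    simpa using hbound (contDiff_dirD hg v) (hasCompactSupport_dirD hgc v)
  have hTh := contDiff_transports hh [v]
  have hThc := hasCompactSupport_transports hc [v]
  obtain ⟨C₀, hC₀⟩ := hbound hh hc
  obtain ⟨C₁, hC₁⟩ := hbound' hh hc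
  obtain ⟨C₂, hC₂⟩ := hbound hTh hThc
  obtain ⟨C₃, hC₃⟩ := hbound' hTh hThc
  have hinner := integral_gammaKernel_zero_mul (hline hh) (hcont hh) hC₀ hC₁
  have houter := integral_gammaKernel_succ_mul 0 (hline hTh) (hcont hTh) hC₂ hC₃
  simp only [sub_neg_eq_add, zero_smul, sub_zero] at hinner houter
  exact houter.trans hinner

theorem integral_prod_gammaKernel_one_mul_transports {n : ℕ} (hh : ContDiff ℝ (⊤ : ℕ∞) h)
    (hc : HasCompactSupport h) (v : Fin n → E) (x : E) :
    ∫ τ : Fin n → ℝ, (∏ j, (gammaKernel 1 (τ j) : ℂ)) *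
      transports ((List.finRange n).flatMap fun j ↦ [v j, v j]) h (x - ∑ j, τ j • v j) = h x := by
  induction n generalizing h x with
  | zero => simp [transports, measureReal_def, volume_pi]
  | succ n ih =>
    have hh₀ := contDiff_transports hh [v 0, v 0]
    have hc₀ := hasCompactSupport_transports hc [v 0, v 0]
    set l := (List.finRange n).flatMap fun j ↦ [v j.succ, v j.succ]
    have hlist : transports ((List.finRange (n + 1)).flatMap fun j ↦ [v j, v j]) h
        = transports l (transports [v 0, v 0] h) := by
      rw [List.finRange_succ, List.flatMap_cons, transports_append, List.flatMap_map]
    set g := transports l (transports [v 0, v 0] h)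
    have hg : Continuous g := (contDiff_transports hh₀ l).continuous
    obtain ⟨C, hC⟩ := (hasCompactSupport_transports hc₀ l).exists_bound_of_continuous hg
    have hkernel : Integrable fun τ : Fin n → ℝ ↦ ∏ j, (gammaKernel 1 (τ j) : ℂ) :=
      Integrable.fintype_prod fun _ ↦ (integrable_gammaKernel 1).ofReal
    have hInt : Integrable (fun τ : ℝ × (Fin n → ℝ) ↦ (gammaKernel 1 τ.1 *
        ∏ j, (gammaKernel 1 (τ.2 j) : ℂ)) * g (x - (τ.1 • v 0 + ∑ j, τ.2 j • v j.succ)))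
        (volume.prod volume) :=
      ((integrable_gammaKernel 1).ofReal.mul_prod hkernel).mul_bdd (c := C)
        (Continuous.aestronglyMeasurable (by fun_prop)) (.of_forall fun _ ↦ hC _)
    have hsplit := (volume_preserving_piFinSuccAbove (fun _ ↦ ℝ) 0).symm.integral_comp'
      (g := fun τ : Fin (n + 1) → ℝ ↦ (∏ j, (gammaKernel 1 (τ j) : ℂ)) * g (x - ∑ j, τ j • v j))
    rw [hlist, ← hsplit]
    simp only [Fin.prod_univ_succ, Fin.sum_univ_succ]
    refine (integral_prod _ hInt).trans ?_
    rw [← integral_gammaKernel_one_mul_transports hh hc (v 0) x]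
    congr 1 with τ
    rw [← ih hh₀ hc₀ (fun j ↦ v j.succ) (x - τ • v 0), ← integral_const_mul]
    simp only [mul_assoc, sub_add_eq_sub_sub]
    rfl

end Smoothing

section IntegrationByParts

variable {d : ℕ}

theorem dirD_ephase (ℏ : ℝ) (v p s : Q d) :
    dirD v (fun p ↦ ephase ℏ p s) p = (qdot v s / ℏ : ℝ) * Complex.I * ephase ℏ p s := by
  have hdiff : Differentiable ℝ fun p : Q d ↦ ephase ℏ p s := by
    unfold ephase qdot
    fun_prop
  have hline (τ : ℝ) : qdot (p + τ • v) s / ℏ = qdot p s / ℏ + τ * (qdot v s / ℏ) := by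
    rw [qdot_add_left, qdot_smul_left]
    ring
  have hderiv : HasDerivAt (fun τ : ℝ ↦ ephase ℏ (p + τ • v) s)
      ((qdot v s / ℏ : ℝ) * Complex.I * ephase ℏ p s) 0 := by
    simp only [ephase_eq_exp, hline]
    have hphase := ((hasDerivAt_id' (0 : ℝ)).mul_const (qdot v s / ℏ)).const_add (qdot p s / ℏ)
    refine ((hphase.ofReal_comp.mul_const Complex.I).cexp).congr_deriv ?_
    rw [one_mul, zero_mul, add_zero, mul_comm]
  rw [dirD, ← (hdiff p).lineDeriv_eq_fderiv]
  exact hderiv.deriv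

theorem integral_transport_mul_ephase {h : Q d → ℂ} (hh : ContDiff ℝ (⊤ : ℕ∞) h)
    (hc : HasCompactSupport h) (ℏ : ℝ) (v s : Q d) :
    ∫ p, transport v h p * ephase ℏ p s
      = (1 - (qdot v s / ℏ : ℝ) * Complex.I) * ∫ p, h p * ephase ℏ p s := by
  have hInt {g : Q d → ℂ} (hg : ContDiff ℝ (⊤ : ℕ∞) g) (hgc : HasCompactSupport g) :
      Integrable fun p ↦ g p * ephase ℏ p s :=
    Continuous.integrable_of_hasCompactSupport (by have := hg.continuous; fun_prop) hgc.mul_right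
  have hdiff : Differentiable ℝ fun p : Q d ↦ ephase ℏ p s := by
    unfold ephase qdot
    fun_prop
  have hInt₀ := hInt hh hc
  have hInt₁ := hInt (contDiff_dirD hh v) (hasCompactSupport_dirD hc v)
  have hparts : ∫ p, h p * dirD v (fun p ↦ ephase ℏ p s) p = -∫ p, dirD v h p * ephase ℏ p s := by
    refine integral_mul_fderiv_eq_neg_fderiv_mul_of_integrable hInt₁ ?_ hInt₀
      (fun p _ ↦ hh.differentiable (by simp) p) fun p _ ↦ hdiff p
    refine (hInt₀.const_mul ((qdot v s / ℏ : ℝ) * Complex.I)).congr (.of_forall fun p ↦ ?_)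
    exact (mul_left_comm _ _ _).trans (congrArg _ (dirD_ephase ℏ v p s).symm)
  simp only [dirD_ephase, mul_left_comm (h _), integral_const_mul] at hparts
  simp only [transport, add_mul]
  rw [integral_add hInt₀ hInt₁, sub_mul, hparts, one_mul, sub_neg_eq_add]

theorem integral_transports_mul_ephase {h : Q d → ℂ} (hh : ContDiff ℝ (⊤ : ℕ∞) h)
    (hc : HasCompactSupport h) (ℏ : ℝ) (l : List (Q d)) (s : Q d) :
    ∫ p, transports l h p * ephase ℏ p s
      = (l.map fun v ↦ (1 - (qdot v s / ℏ : ℝ) * Complex.I : ℂ)).prod *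
        ∫ p, h p * ephase ℏ p s := by
  induction l generalizing h with
  | nil => simp [transports]
  | cons v l ih =>
    refine (ih (contDiff_transports hh [v]) (hasCompactSupport_transports hc [v])).trans ?_
    rw [List.map_cons, List.prod_cons, mul_comm (1 - _), mul_assoc,
      ← integral_transport_mul_ephase hh hc]
    rfl

end IntegrationByParts

section PhaseSpace

variable {d : ℕ} {f : ℝ → ℝ} {a : Q d × Q d → ℂ}

/-- The coordinate vectors of `ℝ × ℝ^d`, indexed by `none` for `r` and `some i` for `θ_i`. -/
def coordDir : Option (Fin d) → Q d
  | none => eR d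
  | some i => eTh d i

/-- The coordinates of `q` relative to `z`, the angular ones being measured in units of
`f(z.1)⁻¹`. -/
def relCoord (f : ℝ → ℝ) (z q : Q d) : Option (Fin d) → ℝ
  | none => q.1 - z.1
  | some i => f z.1 * (q.2 i - z.2 i)

/-- The coordinate vectors of phase space: `inl j` is a position, `inr j` a momentum direction. -/
def phaseDir : Option (Fin d) ⊕ Option (Fin d) → Q d × Q d :=
  Sum.elim (fun j ↦ (coordDir j, 0)) fun j ↦ (0, coordDir j)

/-- The factors that normalize `phaseDir` with respect to `S^m_f`: angular positions are measured
in units of `lam⁻¹`, angular momenta in units of `lam`. -/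
def phaseWeight (lam : ℝ) : Option (Fin d) ⊕ Option (Fin d) → ℝ
  | .inl (some _) => lam⁻¹
  | .inr (some _) => lam
  | _ => 1

/-- The operator `∏_k (1 + w_k ∂_k)` over a word of phase-space directions, where the weights `w_k`
are frozen at the point of evaluation. -/
def scaledTransports (f : ℝ → ℝ) (l : List (Option (Fin d) ⊕ Option (Fin d)))
    (a : Q d × Q d → ℂ) : Q d × Q d → ℂ :=
  fun x ↦ transports (l.map fun k ↦ phaseWeight (f x.1.1) k • phaseDir k) a x

theorem scaledTransports_eq_sum (ha : ContDiff ℝ (⊤ : ℕ∞) a)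
    (l : List (Option (Fin d) ⊕ Option (Fin d))) (x : Q d × Q d) :
    scaledTransports f l a x = (l.sublists'.map fun s ↦
      ((s.map (phaseWeight (f x.1.1))).prod : ℂ) * dirs (s.map phaseDir) a x).sum := by
  simp only [scaledTransports, transports_eq_sum_dirs ha, List.sublists'_map, List.map_map,
    Function.comp_def, dirs_map_smul ha]

theorem continuous_phaseWeight_comp (hf : Continuous f) (hf₀ : ∀ r, 0 < f r)
    (k : Option (Fin d) ⊕ Option (Fin d)) : Continuous fun r ↦ phaseWeight (f r) k := by
  rcases k with (_ | _) | (_ | _)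
  · exact continuous_const
  · exact hf.inv₀ fun r ↦ (hf₀ r).ne'
  · exact continuous_const
  · exact hf

theorem continuous_scaledTransports (hf : Continuous f) (hf₀ : ∀ r, 0 < f r)
    (ha : ContDiff ℝ (⊤ : ℕ∞) a) (l : List (Option (Fin d) ⊕ Option (Fin d))) :
    Continuous (scaledTransports f l a) := by
  simp only [funext (scaledTransports_eq_sum ha l)]
  refine continuous_list_sum _ fun s _ ↦ .mul ?_ (contDiff_dirs ha _).continuous
  refine Complex.continuous_ofReal.comp (continuous_list_prod _ fun k _ ↦ ?_)
  exact (continuous_phaseWeight_comp hf hf₀ k).comp (continuous_fst.comp continuous_fst)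

theorem hasCompactSupport_scaledTransports (hc : HasCompactSupport a)
    (l : List (Option (Fin d) ⊕ Option (Fin d))) :
    HasCompactSupport (scaledTransports f l a) :=
  hc.mono' fun _ hx ↦ tsupport_transports_subset _ _ (subset_tsupport _ hx)

/-- All weighted derivatives of `a` of order at most `N` are bounded by `M`, uniformly over
phase space. -/
def HasScaledBound (f : ℝ → ℝ) (N : ℕ) (M : ℝ) (a : Q d × Q d → ℂ) : Prop :=
  ∀ l : List (Option (Fin d) ⊕ Option (Fin d)), l.length ≤ N → ∀ x,
    ‖((l.map (phaseWeight (f x.1.1))).prod : ℂ) * dirs (l.map phaseDir) a x‖ ≤ M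

theorem HasScaledBound.nonneg {N : ℕ} {M : ℝ} (hM : HasScaledBound f N M a) : 0 ≤ M :=
  (norm_nonneg _).trans (hM [] (Nat.zero_le _) 0)

theorem HasScaledBound.norm_scaledTransports_le {N : ℕ} {M : ℝ} (hM : HasScaledBound f N M a)
    (ha : ContDiff ℝ (⊤ : ℕ∞) a) {l : List (Option (Fin d) ⊕ Option (Fin d))} (hl : l.length ≤ N)
    (x : Q d × Q d) : ‖scaledTransports f l a x‖ ≤ 2 ^ l.length * M := by
  rw [scaledTransports_eq_sum ha]
  refine (List.le_sum_of_subadditive norm norm_zero.le norm_add_le _).trans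
    ((List.sum_le_card_nsmul _ M ?_).trans_eq (by simp))
  simp only [List.map_map, List.forall_mem_map, List.mem_sublists', Function.comp_apply]
  exact fun s hs ↦ hM s (hs.length_le.trans hl) x

/-- Each position direction twice; the radial one acts first, since the weights of the angular ones
depend on `r`. -/
def positionWord (d : ℕ) : List (Option (Fin d) ⊕ Option (Fin d)) :=
  [.inl none, .inl none] ++ (List.finRange d).flatMap fun i ↦ [.inl (some i), .inl (some i)]

/-- Each momentum direction three times. -/
def momentumWord (d : ℕ) : List (Option (Fin d) ⊕ Option (Fin d)) :=
  let l := univ.toList.map .inr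
  l ++ l ++ l

theorem length_positionWord_append_momentumWord (d : ℕ) :
    (positionWord d ++ momentumWord d).length = 5 * (d + 1) := by
  simp [positionWord, momentumWord]
  ring

end PhaseSpace

section Kernel

section Slices

variable {X Y : Type*} [TopologicalSpace X] [TopologicalSpace Y] [T2Space X] [T2Space Y]
  {h : X × Y → ℂ}

theorem hasCompactSupport_prodMk_left (hc : HasCompactSupport h) (y : Y) :
    HasCompactSupport fun x ↦ h (x, y) :=
  hc.comp_isClosedEmbedding (Function.LeftInverse.isClosedEmbedding (f := Prod.fst) (fun _ ↦ rfl)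
    continuous_fst (.prodMk_left y))

theorem hasCompactSupport_prodMk_right (hc : HasCompactSupport h) (x : X) :
    HasCompactSupport fun y ↦ h (x, y) :=
  hc.comp_isClosedEmbedding (Function.LeftInverse.isClosedEmbedding (f := Prod.snd) (fun _ ↦ rfl)
    continuous_snd (.prodMk_right x))

end Slices

variable {d : ℕ} {f : ℝ → ℝ} {a : Q d × Q d → ℂ}

theorem integral_eq_pow_smul_integral_smul_sub {E : Type*} [NormedAddCommGroup E] [NormedSpace ℝ E]
    {lam : ℝ} (hlam : 0 < lam) (g : (Fin d → ℝ) → E) (c : Fin d → ℝ) :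
    ∫ τ, g τ = lam ^ d • ∫ x, g (lam • (c - x)) := by
  rw [integral_sub_left_eq_self (fun x ↦ g (lam • x)), Measure.integral_comp_smul]
  simp [abs_of_pos hlam, hlam.ne']

theorem eq_integral_radial (ha : ContDiff ℝ (⊤ : ℕ∞) a) (hc : HasCompactSupport a) (m p : Q d) :
    a (m, p) = ∫ r : ℝ, (gammaKernel 1 (m.1 - r) : ℂ) *
      transports [((eR d, 0) : Q d × Q d), (eR d, 0)] a ((r, m.2), p) := by
  rw [← integral_gammaKernel_one_mul_transports ha hc (eR d, 0) (m, p),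
    ← integral_sub_left_eq_self _ volume m.1]
  simp [Prod.sub_def, eR]

theorem eq_integral_angular (ha : ContDiff ℝ (⊤ : ℕ∞) a) (hc : HasCompactSupport a) {lam : ℝ}
    (hlam : 0 < lam) (m p : Q d) :
    a (m, p) = ∫ x : Fin d → ℝ, (lam ^ d * ∏ i, gammaKernel 1 (lam * (m.2 i - x i)) : ℝ) *
      transports ((List.finRange d).flatMap fun i ↦
        [lam⁻¹ • ((eTh d i, 0) : Q d × Q d), lam⁻¹ • (eTh d i, 0)]) a ((m.1, x), p) := by
  rw [← integral_prod_gammaKernel_one_mul_transports ha hc (fun i ↦ lam⁻¹ • (eTh d i, 0)) (m, p),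
    integral_eq_pow_smul_integral_smul_sub hlam _ m.2, ← integral_smul]
  have hpoint (x : Fin d → ℝ) : (m, p) - ∑ i, (lam • (m.2 - x)) i • lam⁻¹ •
      ((eTh d i, 0) : Q d × Q d) = ((m.1, x), p) := by
    have hscale (y : ℝ) : lam * y * lam⁻¹ = y := by field_simp
    ext i
    · simp [Prod.fst_sum, eTh]
    · simp [Prod.fst_sum, Prod.snd_sum, eTh, Pi.single_apply, hscale]
    all_goals simp [Prod.snd_sum]
  simp only [hpoint]
  simp [mul_assoc]

@[fun_prop]
theorem continuous_relCoord {X : Type*} [TopologicalSpace X] {z q : X → Q d} (hf : Continuous f)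
    (hz : Continuous z) (hq : Continuous q) (j : Option (Fin d)) :
    Continuous fun x ↦ relCoord f (z x) (q x) j := by
  cases j <;> simp only [relCoord] <;> fun_prop

theorem eq_integral_scaledTransports (hf : Continuous f) (hf₀ : ∀ r, 0 < f r)
    (ha : ContDiff ℝ (⊤ : ℕ∞) a) (hc : HasCompactSupport a) (m p : Q d) :
    a (m, p) = ∫ z : Q d, (f z.1 ^ d * ∏ j, gammaKernel 1 (relCoord f z m j) : ℝ) *
      scaledTransports f (positionWord d) a (z, p) := by
  have hInt : Integrable (fun z : Q d ↦
      ((f z.1 ^ d * ∏ j, gammaKernel 1 (relCoord f z m j) : ℝ) : ℂ) *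
        scaledTransports f (positionWord d) a (z, p)) (volume.prod volume) := by
    refine Continuous.integrable_of_hasCompactSupport ?_ (.mul_left ?_)
    · have hγ := continuous_gammaKernel one_ne_zero
      have hb := continuous_scaledTransports hf hf₀ ha (positionWord d)
      fun_prop
    · exact hasCompactSupport_prodMk_left (hasCompactSupport_scaledTransports hc _) p
  set g := transports [((eR d, 0) : Q d × Q d), (eR d, 0)] a with hg
  refine (eq_integral_radial ha hc m p).trans (.trans ?_ (integral_prod _ hInt).symm)
  congr 1 with r
  rw [eq_integral_angular (contDiff_transports ha _) (hasCompactSupport_transports hc _) (hf₀ r),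
    ← integral_const_mul]
  congr 1 with x
  have hword : scaledTransports f (positionWord d) a ((r, x), p)
      = transports ((List.finRange d).flatMap fun i ↦
        [(f r)⁻¹ • ((eTh d i, 0) : Q d × Q d), (f r)⁻¹ • (eTh d i, 0)]) g ((r, x), p) := by
    rw [hg, ← transports_append]
    simp [scaledTransports, positionWord, List.map_flatMap, phaseWeight, phaseDir, coordDir]
  rw [hword, ← mul_assoc, Fintype.prod_option]
  simp only [relCoord]
  push_cast
  ring

end Kernel

section Packet

variable {d : ℕ} {f : ℝ → ℝ} {a : Q d × Q d → ℂ}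

/-- The parameters `((z, p), ω)` of a wave packet: a phase-space point and one pair of modulation
parameters per coordinate. -/
abbrev PacketIndex (d : ℕ) : Type := (Q d × Q d) × (Option (Fin d) → ℝ × ℝ)

/-- A wave packet at the phase-space point `x = (z, p)`: the plane wave of momentum `p`, localized
near `z` in the coordinates `relCoord f z` by the windows `(1 + s i X)⁻¹` with `s = ±1`, and
modulated by the frequencies that `separatedPhase` attaches to its first variable. -/
def packet (f : ℝ → ℝ) (s t ℏ : ℝ) (x : PacketIndex d) (q : Q d) : ℂ :=
  ephase ℏ x.1.2 q * ∏ j, Complex.exp ((2 * Real.pi * t * (x.2 j).1 + (x.2 j).2 / ℏ : ℝ) *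
    relCoord f x.1.1 q j * Complex.I) * (1 + s * relCoord f x.1.1 q j * Complex.I)⁻¹

theorem one_add_mul_mul_I_ne_zero (s y : ℝ) : (1 + s * y * Complex.I : ℂ) ≠ 0 := by
  simpa using one_sub_mul_I_ne_zero (-(s * y))

theorem norm_packet_sq {s : ℝ} (hs : s ^ 2 = 1) (t ℏ : ℝ)
    (x : PacketIndex d) (q : Q d) :
    ‖packet f s t ℏ x q‖ ^ 2 = ∏ j, (1 + relCoord f x.1.1 q j ^ 2)⁻¹ := by
  have hwindow (y : ℝ) : ‖(1 + s * y * Complex.I : ℂ)‖ ^ 2 = 1 + y ^ 2 := by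
    rw [← Complex.ofReal_mul, ← Complex.ofReal_one, ← Complex.normSq_eq_norm_sq,
      Complex.normSq_add_mul_I, mul_pow, hs]
    ring
  have hexp (α y : ℝ) : ‖Complex.exp (α * y * Complex.I)‖ = 1 := by
    rw [← Complex.ofReal_mul, Complex.norm_exp_ofReal_mul_I]
  simp only [packet, norm_mul, norm_ephase, norm_prod, hexp, one_mul, norm_inv, ← prod_pow,
    inv_pow, hwindow]

theorem norm_packet_le_one {s : ℝ} (hs : s ^ 2 = 1) (t ℏ : ℝ)
    (x : PacketIndex d) (q : Q d) : ‖packet f s t ℏ x q‖ ≤ 1 := by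
  rw [← sq_le_one_iff₀ (norm_nonneg _), norm_packet_sq hs]
  exact prod_le_one (fun j _ ↦ by positivity) fun j _ ↦ inv_le_one_of_one_le₀ (by nlinarith)

@[fun_prop]
theorem continuous_packet {X : Type*} [TopologicalSpace X] {x : X → PacketIndex d} {q : X → Q d}
    (hf : Continuous f) (s t ℏ : ℝ) (hx : Continuous x) (hq : Continuous q) :
    Continuous fun y ↦ packet f s t ℏ (x y) (q y) := by
  refine .mul (by fun_prop) (continuous_finsetProd _ fun j _ ↦ .mul (by fun_prop) ?_)
  exact .inv₀ (by fun_prop) fun y ↦ one_add_mul_mul_I_ne_zero _ _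

theorem relCoord_convexCombination (f : ℝ → ℝ) (t : ℝ) (z q q' : Q d) (j : Option (Fin d)) :
    relCoord f z (t • q + (1 - t) • q') j
      = t * relCoord f z q j + (1 - t) * relCoord f z q' j := by
  cases j <;> simp only [relCoord, Prod.fst_add, Prod.snd_add, Prod.smul_fst, Prod.smul_snd,
    Pi.add_apply, Pi.smul_apply, smul_eq_mul] <;> ring

theorem packet_mul_packet (f : ℝ → ℝ) (t ℏ : ℝ) (z p : Q d) (ω : Option (Fin d) → ℝ × ℝ)
    (q q' : Q d) :
    packet f 1 t ℏ ((z, p), ω) q * packet f (-1) (1 - t) (-ℏ) ((z, p), ω) q'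
      = ephase ℏ p (q - q') * (∏ j, ((1 + relCoord f z q j * Complex.I) *
          (1 - relCoord f z q' j * Complex.I))⁻¹) *
        Complex.exp ((∑ j, separatedPhase t ℏ (ω j) (relCoord f z q j, relCoord f z q' j) : ℝ) *
          Complex.I) := by
  rw [ephase_sub, packet, packet, mul_mul_mul_comm, mul_assoc (_ * _), ← prod_mul_distrib,
    Complex.ofReal_sum, sum_mul, Complex.exp_sum, ← prod_mul_distrib]
  congr 1
  refine prod_congr rfl fun j _ ↦ ?_
  rw [mul_mul_mul_comm, ← Complex.exp_add, mul_inv, mul_comm]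
  congr 2 <;> simp only [separatedPhase] <;> push_cast <;> ring

/- The right-hand side is the profile of `integral_ephase_eq_integral_scaledTransports`. -/
theorem integral_mul_packet_mul_packet {t ℏ : ℝ} {c : (Option (Fin d) → ℝ × ℝ) → ℂ}
    (hc : ∀ X : Option (Fin d) → ℝ × ℝ,
      ∏ j, (1 + (X j).1 * Complex.I) * (1 - (X j).2 * Complex.I) *
          (gammaKernel 1 (t * (X j).1 + (1 - t) * (X j).2) *
            ((1 - (((X j).1 - (X j).2) / ℏ : ℝ) * Complex.I) ^ 3)⁻¹)
        = ∫ ω, c ω * Complex.exp ((∑ j, separatedPhase t ℏ (ω j) (X j) : ℝ) * Complex.I))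
    (f : ℝ → ℝ) (z p q q' : Q d) :
    ∫ ω, c ω * (packet f 1 t ℏ ((z, p), ω) q * packet f (-1) (1 - t) (-ℏ) ((z, p), ω) q')
      = ephase ℏ p (q - q') * ∏ j, ((gammaKernel 1 (relCoord f z (t • q + (1 - t) • q') j) : ℂ) *
          ((1 - ((relCoord f z q j - relCoord f z q' j) / ℏ : ℝ) * Complex.I) ^ 3)⁻¹) := by
  simp only [packet_mul_packet, mul_left_comm (c _), integral_const_mul, mul_assoc]
  rw [← hc fun j ↦ (relCoord f z q j, relCoord f z q' j), ← prod_mul_distrib]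
  congr 1
  refine prod_congr rfl fun j _ ↦ ?_
  have h₁ := one_add_mul_mul_I_ne_zero 1 (relCoord f z q j)
  have h₂ := one_sub_mul_I_ne_zero (relCoord f z q' j)
  rw [Complex.ofReal_one, one_mul] at h₁
  dsimp only
  rw [relCoord_convexCombination, ← mul_assoc, inv_mul_cancel₀ (mul_ne_zero h₁ h₂), one_mul]

end Packet

section KernelFormula

variable {d : ℕ} {f : ℝ → ℝ} {a : Q d × Q d → ℂ}

theorem transports_map_prodMk_right {E F : Type*} [NormedAddCommGroup E] [NormedSpace ℝ E]
    [NormedAddCommGroup F] [NormedSpace ℝ F] {h : E × F → ℂ} (hh : ContDiff ℝ (⊤ : ℕ∞) h)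
    (l : List F) (x : E) (y : F) :
    transports (l.map fun v ↦ ((0, v) : E × F)) h (x, y) = transports l (fun y ↦ h (x, y)) y := by
  induction l generalizing h with
  | nil => rfl
  | cons v l ih =>
    have hslice (y : F) : dirD v (fun y ↦ h (x, y)) y = dirD ((0, v) : E × F) h (x, y) := by
      have hd := (hh.differentiable (by simp) (x, y)).hasFDerivAt
      have hslice := hd.comp y (hasFDerivAt_prodMk_right (𝕜 := ℝ) x y)
      exact congrArg (· v) hslice.fderiv
    refine (ih (hh.add (contDiff_dirD hh _))).trans ?_
    simp only [transports, List.foldl_cons, ← hslice]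
    rfl

theorem qdot_phaseWeight_smul_sub (f : ℝ → ℝ) (z q q' : Q d) (j : Option (Fin d)) :
    qdot (phaseWeight (f z.1) (.inr j) • coordDir j) (q - q')
      = relCoord f z q j - relCoord f z q' j := by
  cases j <;> simp [qdot, phaseWeight, coordDir, relCoord, eR, eTh, Pi.single_apply]
  ring

theorem integral_scaledTransports_mul_ephase (ha : ContDiff ℝ (⊤ : ℕ∞) a)
    (hc : HasCompactSupport a) (l : List (Option (Fin d) ⊕ Option (Fin d))) (ℏ : ℝ)
    (z q q' : Q d) :
    ∫ p, scaledTransports f (l ++ momentumWord d) a (z, p) * ephase ℏ p (q - q')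
      = (∏ j, (1 - ((relCoord f z q j - relCoord f z q' j) / ℏ : ℝ) * Complex.I : ℂ) ^ 3) *
        ∫ p, scaledTransports f l a (z, p) * ephase ℏ p (q - q') := by
  set g := transports (l.map fun k ↦ phaseWeight (f z.1) k • phaseDir k) a
  set v : List (Q d) := univ.toList.map fun j ↦ phaseWeight (f z.1) (.inr j) • coordDir j with hv
  have hg : ContDiff ℝ (⊤ : ℕ∞) g := contDiff_transports ha _
  have hslice : ContDiff ℝ (⊤ : ℕ∞) fun p ↦ g (z, p) := hg.comp (contDiff_prodMk_right z)
  have hsupp : HasCompactSupport fun p ↦ g (z, p) :=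
    hasCompactSupport_prodMk_right (hasCompactSupport_transports hc _) z
  have hword : (momentumWord d).map (fun k ↦ phaseWeight (f z.1) k • phaseDir k)
      = (v ++ v ++ v).map fun v ↦ ((0, v) : Q d × Q d) := by
    simp [momentumWord, phaseDir, v, Function.comp_def]
  have hleft (p : Q d) : scaledTransports f (l ++ momentumWord d) a (z, p)
      = transports (v ++ v ++ v) (fun p ↦ g (z, p)) p := by
    rw [scaledTransports, List.map_append, transports_append, hword,
      transports_map_prodMk_right hg]
  have hprod : (v.map fun v ↦ (1 - (qdot v (q - q') / ℏ : ℝ) * Complex.I : ℂ)).prod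
      = ∏ j, (1 - ((relCoord f z q j - relCoord f z q' j) / ℏ : ℝ) * Complex.I) := by
    simp only [hv, List.map_map, prod_map_toList, Function.comp_apply, qdot_phaseWeight_smul_sub]
  simp only [hleft, integral_transports_mul_ephase hslice hsupp, List.map_append,
    List.prod_append, hprod, prod_pow]
  simp only [pow_succ, pow_zero, one_mul]
  rfl

theorem integrable_mul_scaledTransports_mul_ephase (hf : Continuous f) (hf₀ : ∀ r, 0 < f r)
    (ha : ContDiff ℝ (⊤ : ℕ∞) a) (hc : HasCompactSupport a)
    (l : List (Option (Fin d) ⊕ Option (Fin d))) {K : Q d → ℂ} (hK : Continuous K) (ℏ : ℝ)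
    (s : Q d) :
    Integrable fun x : Q d × Q d ↦ K x.1 * (scaledTransports f l a x * ephase ℏ x.2 s) := by
  have hb := continuous_scaledTransports hf hf₀ ha l
  exact Continuous.integrable_of_hasCompactSupport (by fun_prop)
    (hasCompactSupport_scaledTransports hc l).mul_right.mul_left

theorem integral_ephase_eq_integral_scaledTransports (hf : Continuous f) (hf₀ : ∀ r, 0 < f r)
    (ha : ContDiff ℝ (⊤ : ℕ∞) a) (hc : HasCompactSupport a) (ℏ : ℝ) (m q q' : Q d) :
    ∫ p, a (m, p) * ephase ℏ p (q - q')
      = ∫ x : Q d × Q d, (f x.1.1 ^ d : ℝ) *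
        scaledTransports f (positionWord d ++ momentumWord d) a x * (ephase ℏ x.2 (q - q') *
          ∏ j, ((gammaKernel 1 (relCoord f x.1 m j) : ℂ) *
            ((1 - ((relCoord f x.1 q j - relCoord f x.1 q' j) / ℏ : ℝ) * Complex.I) ^ 3)⁻¹)) := by
  have hγ := continuous_gammaKernel one_ne_zero
  have hInt (l) {K : Q d → ℂ} (hK : Continuous K) :=
    integrable_mul_scaledTransports_mul_ephase hf hf₀ ha hc l hK ℏ (q - q')
  set σ : Q d → Option (Fin d) → ℂ := fun z j ↦
    1 - ((relCoord f z q j - relCoord f z q' j) / ℏ : ℝ) * Complex.I with hσ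
  have hσ₀ (z) : (∏ j, σ z j ^ 3) ≠ 0 :=
    prod_ne_zero_iff.2 fun j _ ↦ pow_ne_zero 3 (one_sub_mul_I_ne_zero _)
  set K : Q d → ℂ := fun z ↦ (f z.1 ^ d * ∏ j, gammaKernel 1 (relCoord f z m j) : ℝ)
  have hK : Continuous K := by fun_prop
  have hKσ : Continuous fun z ↦ K z * (∏ j, σ z j ^ 3)⁻¹ := hK.mul (.inv₀ (by fun_prop) hσ₀)
  calc ∫ p, a (m, p) * ephase ℏ p (q - q')
    _ = ∫ p, ∫ z, K z *
        (scaledTransports f (positionWord d) a (z, p) * ephase ℏ p (q - q')) := by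
      simp only [eq_integral_scaledTransports hf hf₀ ha hc m, ← integral_mul_const, mul_assoc, K]
    _ = ∫ z, K z * ∫ p, scaledTransports f (positionWord d) a (z, p) * ephase ℏ p (q - q') := by
      simp only [← integral_const_mul]
      exact integral_integral_swap (hInt (positionWord d) hK).swap
    _ = ∫ z, K z * (∏ j, σ z j ^ 3)⁻¹ * ∫ p,
        scaledTransports f (positionWord d ++ momentumWord d) a (z, p) * ephase ℏ p (q - q') := by
      congr 1 with z
      rw [integral_scaledTransports_mul_ephase ha hc, mul_assoc, inv_mul_cancel_left₀ (hσ₀ z)]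
    _ = ∫ x : Q d × Q d, K x.1 * (∏ j, σ x.1 j ^ 3)⁻¹ *
        (scaledTransports f (positionWord d ++ momentumWord d) a x * ephase ℏ x.2 (q - q')) := by
      simp only [← integral_const_mul]
      exact (integral_prod _ (hInt _ hKσ)).symm
    _ = _ := by
      congr 1 with x
      simp only [prod_mul_distrib, prod_inv_distrib, K, hσ]
      push_cast
      ring

/-- The coefficients of the expansion of the kernel of `Op ℏ t a` into products of packets, for a
density `c` of modulation parameters. -/
def packetAmplitude (f : ℝ → ℝ) (a : Q d × Q d → ℂ) (c : (Option (Fin d) → ℝ × ℝ) → ℂ) :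
    PacketIndex d → ℂ :=
  fun x ↦ (f x.1.1.1 ^ d : ℝ) *
    scaledTransports f (positionWord d ++ momentumWord d) a x.1 * c x.2

theorem integrable_packetAmplitude (hf : Continuous f) (hf₀ : ∀ r, 0 < f r)
    (ha : ContDiff ℝ (⊤ : ℕ∞) a) (hac : HasCompactSupport a)
    {c : (Option (Fin d) → ℝ × ℝ) → ℂ} (hc : Integrable c) :
    Integrable (packetAmplitude f a c) := by
  have hb := continuous_scaledTransports hf hf₀ ha (positionWord d ++ momentumWord d)
  refine Integrable.mul_prod (f := fun x : Q d × Q d ↦ ((f x.1.1 ^ d : ℝ) : ℂ) *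
    scaledTransports f (positionWord d ++ momentumWord d) a x) ?_ hc
  exact Continuous.integrable_of_hasCompactSupport (by fun_prop)
    (hasCompactSupport_scaledTransports hac _).mul_left

theorem exists_integral_ephase_eq_integral_packet (d : ℕ) : ∃ C, ∀ t ∈ Set.Icc (0 : ℝ) 1,
    ∀ ℏ ∈ Set.Ioc (0 : ℝ) 1, ∃ c : (Option (Fin d) → ℝ × ℝ) → ℂ, Integrable c ∧ ∫ ω, ‖c ω‖ ≤ C ∧
      ∀ f : ℝ → ℝ, Continuous f → (∀ r, 0 < f r) → ∀ a : Q d × Q d → ℂ,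
        ContDiff ℝ (⊤ : ℕ∞) a → HasCompactSupport a → ∀ q q' : Q d,
          ∫ p, a (t • q + (1 - t) • q', p) * ephase ℏ p (q - q') = ∫ x, packetAmplitude f a c x *
            (packet f 1 t ℏ x q * packet f (-1) (1 - t) (-ℏ) x q') := by
  obtain ⟨C, hC⟩ := exists_isSuperposition_separated
  refine ⟨C ^ Fintype.card (Option (Fin d)), fun t ht ℏ hℏ ↦ ?_⟩
  obtain ⟨c, hc, hcC, hsep⟩ :=
    IsSuperposition.prod_pi fun _ : Option (Fin d) ↦ hC t ht ℏ hℏ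
  refine ⟨c, hc, hcC, fun f hf hf₀ a ha hac q q' ↦ ?_⟩
  have hInt : Integrable (fun x ↦ packetAmplitude f a c x *
      (packet f 1 t ℏ x q * packet f (-1) (1 - t) (-ℏ) x q')) (volume.prod volume) := by
    refine (integrable_packetAmplitude hf hf₀ ha hac hc).mul_bdd (c := 1)
      (Continuous.aestronglyMeasurable (by fun_prop)) (.of_forall fun x ↦ ?_)
    rw [norm_mul]
    exact mul_le_one₀ (norm_packet_le_one (one_pow 2) ..) (norm_nonneg _)
      (norm_packet_le_one (by norm_num) ..)
  rw [integral_ephase_eq_integral_scaledTransports hf hf₀ ha hac]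
  refine .trans ?_ (integral_prod _ hInt).symm
  congr 1 with x
  simp only [← integral_mul_packet_mul_packet hsep, ← integral_const_mul, packetAmplitude,
    mul_assoc]

end KernelFormula

section Synthesis

variable {X Y : Type*} [MeasurableSpace X] [MeasurableSpace Y] {μ : Measure X} {ν : Measure Y}

theorem lintegral_mul_mul_sq_le {w V U : Y → ENNReal} (hw : AEMeasurable w ν)
    (hV : AEMeasurable V ν) (hU : AEMeasurable U ν) :
    (∫⁻ y, w y * V y * U y ∂ν) ^ 2 ≤ (∫⁻ y, w y * V y ^ 2 ∂ν) * ∫⁻ y, w y * U y ^ 2 ∂ν := by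
  have hsqrt (a : ENNReal) : (a ^ (1 / 2 : ℝ)) ^ 2 = a := by
    rw [← ENNReal.rpow_natCast, ← ENNReal.rpow_mul]; norm_num
  have hholder := ENNReal.lintegral_mul_le_Lp_mul_Lq ν Real.HolderConjugate.two_two
    ((hw.pow_const (1 / 2 : ℝ)).mul hV) ((hw.pow_const (1 / 2 : ℝ)).mul hU)
  simp only [Pi.mul_apply, ENNReal.rpow_two, mul_pow, hsqrt] at hholder
  calc (∫⁻ y, w y * V y * U y ∂ν) ^ 2
    _ = (∫⁻ y, w y ^ (1 / 2 : ℝ) * V y * (w y ^ (1 / 2 : ℝ) * U y) ∂ν) ^ 2 := by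
      congr 2 with y
      rw [mul_mul_mul_comm, ← sq, hsqrt, mul_assoc]
    _ ≤ _ := by
      rw [← hsqrt (∫⁻ y, w y * V y ^ 2 ∂ν), ← hsqrt (∫⁻ y, w y * U y ^ 2 ∂ν), ← mul_pow]
      gcongr

theorem integral_indicator_conj_mul_self {T : X → ℂ} {S : Set X} (hS : MeasurableSet S)
    (hT : MemLp T 2 (μ.restrict S)) :
    ‖∫ x, S.indicator (fun x ↦ starRingEnd ℂ (T x)) x * T x ∂μ‖ₑ = ∫⁻ x in S, ‖T x‖ₑ ^ 2 ∂μ := by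
  have hmul (x : X) : S.indicator (fun x ↦ starRingEnd ℂ (T x)) x * T x
      = S.indicator (fun x ↦ ((‖T x‖ ^ 2 : ℝ) : ℂ)) x := by
    by_cases hx : x ∈ S <;> simp [hx, Complex.conj_mul']
  simp only [hmul]
  rw [integral_indicator hS, integral_complex_ofReal, ← ofReal_norm,
    Complex.norm_real, Real.norm_of_nonneg (integral_nonneg fun _ ↦ by positivity),
    ofReal_integral_eq_lintegral_ofReal (hT.integrable_norm_pow two_ne_zero)
      (.of_forall fun _ ↦ by positivity)]
  simp only [ENNReal.ofReal_pow (norm_nonneg _), ofReal_norm]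

/- Testing against `conj T` truncated to sets of finite measure, on which the left-hand side is
known to be finite. -/
theorem lintegral_enorm_sq_le_of_forall_integral_mul [SigmaFinite μ] {T : X → ℂ} {A : ENNReal}
    (hT : AEStronglyMeasurable T μ) {K : ℝ} (hK : ∀ x, ‖T x‖ ≤ K)
    (hdual : ∀ v : X → ℂ, Integrable v μ → MemLp v 2 μ →
      ‖∫ x, v x * T x ∂μ‖ₑ ^ 2 ≤ A * ∫⁻ x, ‖v x‖ₑ ^ 2 ∂μ) :
    ∫⁻ x, ‖T x‖ₑ ^ 2 ∂μ ≤ A := by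
  have hfinite {S : Set X} (hS : MeasurableSet S) (hμS : μ S < ⊤) :
      ∫⁻ x in S, ‖T x‖ₑ ^ 2 ∂μ ≤ A := by
    have : IsFiniteMeasure (μ.restrict S) := ⟨by simpa using hμS⟩
    have hTS (p) : MemLp T p (μ.restrict S) := .of_bound hT.restrict K (.of_forall hK)
    set v := S.indicator fun x ↦ starRingEnd ℂ (T x)
    have hv (p) : MemLp v p μ := (memLp_indicator_iff_restrict hS).2 (hTS p).star
    have hv_sq : ∫⁻ x, ‖v x‖ₑ ^ 2 ∂μ = ∫⁻ x in S, ‖T x‖ₑ ^ 2 ∂μ := by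
      rw [← lintegral_indicator hS]
      congr 1 with x
      by_cases hx : x ∈ S <;> simp [v, hx]
    have hlt : ∫⁻ x in S, ‖T x‖ₑ ^ 2 ∂μ < ⊤ := by
      rw [← eLpNorm_two_sq_eq_lintegral]
      exact ENNReal.pow_lt_top (hTS 2).eLpNorm_lt_top
    have htest := hdual v (memLp_one_iff_integrable.1 (hv 1)) (hv 2)
    rw [integral_indicator_conj_mul_self hS (hTS 2), hv_sq, sq] at htest
    rcases eq_or_ne (∫⁻ x in S, ‖T x‖ₑ ^ 2 ∂μ) 0 with h₀ | h₀
    · simp [h₀]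
    · exact (ENNReal.mul_le_mul_iff_left h₀ hlt.ne).1 htest
  rw [← setLIntegral_univ, ← iUnion_spanningSets μ,
    setLIntegral_iUnion_of_directed _ (monotone_spanningSets μ).directed_le]
  exact iSup_le fun n ↦
    hfinite (measurableSet_spanningSets μ n) (measure_spanningSets_lt_top μ n)

theorem lintegral_enorm_integral_mul_sq_le [SigmaFinite μ] [SFinite ν] {B U : Y → ℂ}
    {φ : Y → X → ℂ} (hB : AEStronglyMeasurable B ν) (hU : AEStronglyMeasurable U ν)
    (hBU : Integrable (fun y ↦ B y * U y) ν) (hφ : StronglyMeasurable fun y : Y × X ↦ φ y.1 y.2)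
    (hφ₁ : ∀ y x, ‖φ y x‖ ≤ 1) {A A' : ENNReal}
    (hanalysis : ∫⁻ y, ‖B y‖ₑ * ‖U y‖ₑ ^ 2 ∂ν ≤ A')
    (hbessel : ∀ v : X → ℂ, Integrable v μ → MemLp v 2 μ →
      ∫⁻ y, ‖B y‖ₑ * ‖∫ x, φ y x * v x ∂μ‖ₑ ^ 2 ∂ν ≤ A * ∫⁻ x, ‖v x‖ₑ ^ 2 ∂μ) :
    ∫⁻ x, ‖∫ y, B y * U y * φ y x ∂ν‖ₑ ^ 2 ∂μ ≤ A * A' := by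
  have hprod : AEStronglyMeasurable (fun x : X × Y ↦ B x.2 * U x.2 * φ x.2 x.1) (μ.prod ν) :=
    hBU.aestronglyMeasurable.comp_snd.mul (hφ.comp_measurable measurable_swap).aestronglyMeasurable
  have hbound (y : Y) (x : X) : ‖B y * U y * φ y x‖ ≤ ‖B y * U y‖ := by
    rw [norm_mul]
    exact mul_le_of_le_one_right (norm_nonneg _) (hφ₁ y x)
  refine lintegral_enorm_sq_le_of_forall_integral_mul hprod.integral_prod_right'
    (K := ∫ y, ‖B y * U y‖ ∂ν) (fun x ↦ norm_integral_le_of_norm_le hBU.norm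
      (.of_forall fun y ↦ hbound y x)) fun v hv hv₂ ↦ ?_
  have hV : AEStronglyMeasurable (fun y ↦ ∫ x, φ y x * v x ∂μ) ν :=
    (hφ.aestronglyMeasurable.mul hv.aestronglyMeasurable.comp_snd).integral_prod_right'
  have hfubini : ∫ x, v x * ∫ y, B y * U y * φ y x ∂ν ∂μ
      = ∫ y, B y * U y * ∫ x, φ y x * v x ∂μ ∂ν := by
    simp only [← integral_const_mul]
    rw [integral_integral_swap]
    · simp only [mul_comm, mul_left_comm]
    · refine (hv.mul_prod hBU).mono (hv.aestronglyMeasurable.comp_fst.mul hprod)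
        (.of_forall fun x ↦ ?_)
      simp only [Function.uncurry_def, norm_mul (v _)]
      gcongr
      exact hbound _ _
  calc ‖∫ x, v x * ∫ y, B y * U y * φ y x ∂ν ∂μ‖ₑ ^ 2
    _ ≤ (∫⁻ y, ‖B y‖ₑ * ‖U y‖ₑ * ‖∫ x, φ y x * v x ∂μ‖ₑ ∂ν) ^ 2 := by
      rw [hfubini]
      gcongr
      exact (enorm_integral_le_lintegral_enorm _).trans_eq (by simp only [enorm_mul])
    _ ≤ _ := lintegral_mul_mul_sq_le hB.enorm hU.enorm hV.enorm
    _ ≤ A' * (A * ∫⁻ x, ‖v x‖ₑ ^ 2 ∂μ) := by gcongr; exact hbessel v hv hv₂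
    _ = _ := by rw [← mul_assoc, mul_comm A']

end Synthesis

section Bessel

theorem integral_prod_inv_one_add_sq (ι : Type*) [Fintype ι] :
    ∫ x : ι → ℝ, ∏ i, (1 + x i ^ 2)⁻¹ = Real.pi ^ Fintype.card ι := by
  rw [integral_fintype_prod_volume_eq_pow fun x : ℝ ↦ (1 + x ^ 2)⁻¹, integral_univ_inv_one_add_sq]

theorem lintegral_pow_mul_prod_inv_one_add_sq {d : ℕ} {lam : ℝ} (hlam : 0 < lam)
    (c : Fin d → ℝ) :
    ∫⁻ x : Fin d → ℝ, ENNReal.ofReal (lam ^ d * ∏ i, (1 + (lam * (c i - x i)) ^ 2)⁻¹)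
      = ENNReal.ofReal (Real.pi ^ d) := by
  have hintegral : ∫ x : Fin d → ℝ, lam ^ d * ∏ i, (1 + (lam * (c i - x i)) ^ 2)⁻¹
      = Real.pi ^ d := by
    have hunit := integral_prod_inv_one_add_sq (Fin d)
    rw [integral_eq_pow_smul_integral_smul_sub hlam _ c, Fintype.card_fin, smul_eq_mul,
      ← integral_const_mul] at hunit
    exact hunit
  rw [← hintegral, ofReal_integral_eq_lintegral_ofReal]
  · refine .of_integral_ne_zero ?_
    rw [hintegral]
    positivity
  · exact .of_forall fun x ↦ mul_nonneg (by positivity) (prod_nonneg fun i _ ↦ by positivity)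

variable {d : ℕ} {f : ℝ → ℝ}

theorem continuous_prod_inv_one_add_relCoord_sq {X : Type*} [TopologicalSpace X] {z q : X → Q d}
    (hf : Continuous f) (hz : Continuous z) (hq : Continuous q) :
    Continuous fun x ↦ ∏ j, (1 + relCoord f (z x) (q x) j ^ 2)⁻¹ :=
  continuous_finsetProd _ fun j _ ↦ .inv₀ (by fun_prop) fun x ↦ by positivity

theorem lintegral_prod_inv_one_add_relCoord_sq (hf : Continuous f) (hf₀ : ∀ r, 0 < f r)
    (q : Q d) :
    ∫⁻ z : Q d, ENNReal.ofReal (f z.1 ^ d * ∏ j, (1 + relCoord f z q j ^ 2)⁻¹)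
      = ENNReal.ofReal (Real.pi ^ (d + 1)) := by
  have hcont : Continuous fun z : Q d ↦ f z.1 ^ d * ∏ j, (1 + relCoord f z q j ^ 2)⁻¹ :=
    .mul (by fun_prop) (continuous_prod_inv_one_add_relCoord_sq hf continuous_id continuous_const)
  have hangular (r : ℝ) :
      ∫⁻ θ : Fin d → ℝ, ENNReal.ofReal (f r ^ d * ∏ j, (1 + relCoord f (r, θ) q j ^ 2)⁻¹)
        = ENNReal.ofReal (1 + (q.1 - r) ^ 2)⁻¹ * ENNReal.ofReal (Real.pi ^ d) := by
    rw [← lintegral_pow_mul_prod_inv_one_add_sq (hf₀ r) q.2,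
      ← lintegral_const_mul' _ _ ENNReal.ofReal_ne_top]
    simp only [← ENNReal.ofReal_mul (show 0 ≤ (1 + (q.1 - r) ^ 2)⁻¹ by positivity),
      Fintype.prod_option, relCoord, mul_left_comm]
  have hradial : ∫⁻ r, ENNReal.ofReal (1 + (q.1 - r) ^ 2)⁻¹ = ENNReal.ofReal Real.pi := by
    rw [← integral_univ_inv_one_add_sq, ofReal_integral_eq_lintegral_ofReal
      integrable_inv_one_add_sq (.of_forall fun _ ↦ by positivity)]
    exact lintegral_sub_left_eq_self (fun r ↦ ENNReal.ofReal (1 + r ^ 2)⁻¹) q.1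
  rw [Measure.volume_eq_prod, lintegral_prod _ hcont.measurable.ennreal_ofReal.aemeasurable]
  simp only [hangular]
  rw [lintegral_mul_const' _ _ ENNReal.ofReal_ne_top, hradial,
    ← ENNReal.ofReal_mul Real.pi_pos.le, pow_succ']

theorem lintegral_enorm_integral_packet_mul_sq {s : ℝ} (hs : s ^ 2 = 1) (hf : Continuous f)
    (t : ℝ) {ℏ : ℝ} (hℏ : ℏ ≠ 0) (z : Q d) (ω : Option (Fin d) → ℝ × ℝ) {v : Q d → ℂ}
    (hv : Integrable v) (hv₂ : MemLp v 2) :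
    ∫⁻ p, ‖∫ q, packet f s t ℏ ((z, p), ω) q * v q‖ₑ ^ 2
      = ENNReal.ofReal ((2 * Real.pi * |ℏ|) ^ (d + 1)) *
        ∫⁻ q, ENNReal.ofReal (∏ j, (1 + relCoord f z q j ^ 2)⁻¹) * ‖v q‖ₑ ^ 2 := by
  set W : Q d → ℂ := packet f s t ℏ ((z, 0), ω) with hW
  have hpacket (p q : Q d) : packet f s t ℏ ((z, p), ω) q = W q * ephase ℏ p q := by
    have hzero : ephase ℏ (0 : Q d) q = 1 := by simp [ephase, qdot]
    simp only [hW, packet, hzero, one_mul, mul_comm]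
  have hWc : Continuous W := by fun_prop
  have hW₁ := norm_packet_le_one (f := f) hs t ℏ ((z, 0), ω)
  have hWv : Integrable fun q ↦ W q * v q := hv.bdd_mul hWc.aestronglyMeasurable (.of_forall hW₁)
  have hWv₂ : MemLp (fun q ↦ W q * v q) 2 := by
    refine hv₂.of_le hWv.aestronglyMeasurable (.of_forall fun q ↦ ?_)
    rw [norm_mul]
    exact mul_le_of_le_one_left (norm_nonneg _) (hW₁ q)
  have hW_sq (q : Q d) : ‖W q‖ₑ ^ 2 = ENNReal.ofReal (∏ j, (1 + relCoord f z q j ^ 2)⁻¹) := by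
    rw [← norm_packet_sq hs t ℏ ((z, 0), ω), ENNReal.ofReal_pow (norm_nonneg _), ofReal_norm]
  simp only [hpacket, mul_right_comm, plancherel_ephase hℏ hWv hWv₂, enorm_mul, mul_pow, hW_sq]

theorem aestronglyMeasurable_integral_packet_mul {X : Type*} [TopologicalSpace X]
    [MeasurableSpace X] [OpensMeasurableSpace X] (μ : Measure X) (hf : Continuous f) (s t ℏ : ℝ)
    {v : Q d → ℂ} (hv : Integrable v) {x : X → PacketIndex d} (hx : Continuous x) :
    AEStronglyMeasurable (fun y ↦ ∫ q, packet f s t ℏ (x y) q * v q) μ := by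
  have hpacket : Continuous fun y : X × Q d ↦ packet f s t ℏ (x y.1) y.2 := by fun_prop
  exact (hpacket.aestronglyMeasurable.mul hv.aestronglyMeasurable.comp_snd).integral_prod_right'

/- Exact phase-space Bessel identity; the weight `f ^ d` is the Jacobian of `relCoord f z`. -/
theorem lintegral_pow_mul_enorm_integral_packet_mul_sq {s : ℝ} (hs : s ^ 2 = 1)
    (hf : Continuous f) (hf₀ : ∀ r, 0 < f r) (t : ℝ) {ℏ : ℝ} (hℏ : ℏ ≠ 0)
    (ω : Option (Fin d) → ℝ × ℝ) {v : Q d → ℂ} (hv : Integrable v) (hv₂ : MemLp v 2) :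
    ∫⁻ y : Q d × Q d, ENNReal.ofReal (f y.1.1 ^ d) * ‖∫ q, packet f s t ℏ (y, ω) q * v q‖ₑ ^ 2
      = ENNReal.ofReal ((2 * Real.pi * |ℏ|) ^ (d + 1) * Real.pi ^ (d + 1)) *
        ∫⁻ q, ‖v q‖ₑ ^ 2 := by
  have hpow (r : ℝ) : 0 ≤ f r ^ d := pow_nonneg (hf₀ r).le d
  have hanalysis := aestronglyMeasurable_integral_packet_mul volume hf s t ℏ hv
    (by fun_prop : Continuous fun y : Q d × Q d ↦ ((y, ω) : PacketIndex d))
  have hwindow : Continuous fun y : Q d × Q d ↦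
      f y.1.1 ^ d * ∏ j, (1 + relCoord f y.1 y.2 j ^ 2)⁻¹ :=
    .mul (by fun_prop) (continuous_prod_inv_one_add_relCoord_sq hf continuous_fst continuous_snd)
  have hweight : Measurable fun y : Q d × Q d ↦ ENNReal.ofReal (f y.1.1 ^ d) := by fun_prop
  calc ∫⁻ y : Q d × Q d, ENNReal.ofReal (f y.1.1 ^ d) *
        ‖∫ q, packet f s t ℏ (y, ω) q * v q‖ₑ ^ 2
    _ = ∫⁻ z : Q d, ENNReal.ofReal (f z.1 ^ d) *
        ∫⁻ p, ‖∫ q, packet f s t ℏ ((z, p), ω) q * v q‖ₑ ^ 2 := by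
      refine (lintegral_prod _ (hweight.aemeasurable.mul (hanalysis.enorm.pow_const 2))).trans ?_
      simp only [Pi.mul_apply, lintegral_const_mul' _ _ ENNReal.ofReal_ne_top]
    _ = ENNReal.ofReal ((2 * Real.pi * |ℏ|) ^ (d + 1)) * ∫⁻ z : Q d, ∫⁻ q,
        ENNReal.ofReal (f z.1 ^ d * ∏ j, (1 + relCoord f z q j ^ 2)⁻¹) * ‖v q‖ₑ ^ 2 := by
      simp only [lintegral_enorm_integral_packet_mul_sq hs hf t hℏ _ ω hv hv₂,
        ← lintegral_const_mul' _ _ ENNReal.ofReal_ne_top, ENNReal.ofReal_mul (hpow _),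
        mul_left_comm, mul_assoc]
    _ = ENNReal.ofReal ((2 * Real.pi * |ℏ|) ^ (d + 1)) * ∫⁻ q,
        ENNReal.ofReal (Real.pi ^ (d + 1)) * ‖v q‖ₑ ^ 2 := by
      rw [lintegral_lintegral_swap (hwindow.measurable.ennreal_ofReal.aemeasurable.mul
        (hv.aestronglyMeasurable.comp_snd.enorm.pow_const 2))]
      congr 2 with q
      have hq : Continuous fun z : Q d ↦ f z.1 ^ d * ∏ j, (1 + relCoord f z q j ^ 2)⁻¹ :=
        hwindow.comp (.prodMk_left q)
      rw [lintegral_mul_const _ hq.measurable.ennreal_ofReal,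
        lintegral_prod_inv_one_add_relCoord_sq hf hf₀]
    _ = _ := by
      rw [lintegral_const_mul' _ _ ENNReal.ofReal_ne_top, ← mul_assoc,
        ← ENNReal.ofReal_mul (by positivity)]

theorem enorm_packetAmplitude_le {a : Q d × Q d → ℂ} (hf₀ : ∀ r, 0 < f r) {M : ℝ}
    (hM : HasScaledBound f (5 * (d + 1)) M a) (ha : ContDiff ℝ (⊤ : ℕ∞) a)
    (c : (Option (Fin d) → ℝ × ℝ) → ℂ) (x : PacketIndex d) :
    ‖packetAmplitude f a c x‖ₑ
      ≤ ENNReal.ofReal (2 ^ (5 * (d + 1)) * M) * (‖c x.2‖ₑ * ENNReal.ofReal (f x.1.1.1 ^ d)) := by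
  have hlength := length_positionWord_append_momentumWord d
  have hamp := hM.norm_scaledTransports_le ha hlength.le x.1
  rw [hlength] at hamp
  rw [packetAmplitude, enorm_mul, enorm_mul, mul_right_comm, mul_comm, mul_comm ‖c x.2‖ₑ,
    ← ofReal_norm (scaledTransports ..), ← ofReal_norm (Complex.ofReal _), Complex.norm_real,
    Real.norm_of_nonneg (pow_nonneg (hf₀ _).le d)]
  gcongr

theorem lintegral_enorm_packetAmplitude_mul_sq_le {s : ℝ} (hs : s ^ 2 = 1) (hf : Continuous f)
    (hf₀ : ∀ r, 0 < f r) (t : ℝ) {ℏ : ℝ} (hℏ : ℏ ≠ 0) {a : Q d × Q d → ℂ} {M : ℝ}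
    (hM : HasScaledBound f (5 * (d + 1)) M a) (ha : ContDiff ℝ (⊤ : ℕ∞) a)
    {c : (Option (Fin d) → ℝ × ℝ) → ℂ} (hc : Integrable c) {v : Q d → ℂ}
    (hv : Integrable v) (hv₂ : MemLp v 2) :
    ∫⁻ x, ‖packetAmplitude f a c x‖ₑ * ‖∫ q, packet f s t ℏ x q * v q‖ₑ ^ 2
      ≤ ENNReal.ofReal (2 ^ (5 * (d + 1)) * M * (∫ ω, ‖c ω‖) *
        ((2 * Real.pi * |ℏ|) ^ (d + 1) * Real.pi ^ (d + 1))) * ∫⁻ q, ‖v q‖ₑ ^ 2 := by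
  have hM₀ : 0 ≤ M := hM.nonneg
  have hanalysis := aestronglyMeasurable_integral_packet_mul
    (volume.prod volume : Measure (PacketIndex d)) hf s t ℏ hv continuous_id
  have hweight : Measurable fun x : PacketIndex d ↦ ENNReal.ofReal (f x.1.1.1 ^ d) := by fun_prop
  have hmeas := ((hc.aestronglyMeasurable.comp_snd (μ := (volume : Measure (Q d × Q d)))).enorm.mul
    (hweight.aemeasurable (μ := volume.prod volume))).mul (hanalysis.enorm.pow_const 2)
  have hbessel := fun ω ↦ lintegral_pow_mul_enorm_integral_packet_mul_sq hs hf hf₀ t hℏ ω hv hv₂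
  calc ∫⁻ x, ‖packetAmplitude f a c x‖ₑ * ‖∫ q, packet f s t ℏ x q * v q‖ₑ ^ 2
    _ ≤ ENNReal.ofReal (2 ^ (5 * (d + 1)) * M) * ∫⁻ x : PacketIndex d,
        ‖c x.2‖ₑ * ENNReal.ofReal (f x.1.1.1 ^ d) * ‖∫ q, packet f s t ℏ x q * v q‖ₑ ^ 2 := by
      rw [← lintegral_const_mul' _ _ ENNReal.ofReal_ne_top]
      refine lintegral_mono fun x ↦ ?_
      rw [← mul_assoc]
      gcongr
      exact enorm_packetAmplitude_le hf₀ hM ha c x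
    _ = ENNReal.ofReal (2 ^ (5 * (d + 1)) * M) * ∫⁻ ω, ‖c ω‖ₑ * ∫⁻ y : Q d × Q d,
        ENNReal.ofReal (f y.1.1 ^ d) * ‖∫ q, packet f s t ℏ (y, ω) q * v q‖ₑ ^ 2 := by
      congr 1
      refine (lintegral_prod_symm _ hmeas).trans ?_
      simp only [Pi.mul_apply, mul_assoc, lintegral_const_mul' _ _ enorm_ne_top, id]
    _ = _ := by
      simp only [hbessel]
      rw [lintegral_mul_const'' _ hc.aestronglyMeasurable.enorm,
        ENNReal.ofReal_mul (p := 2 ^ (5 * (d + 1)) * M * ∫ ω, ‖c ω‖) (by positivity),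
        ENNReal.ofReal_mul (p := 2 ^ (5 * (d + 1)) * M) (by positivity),
        ofReal_integral_norm_eq_lintegral_enorm hc]
      simp only [mul_assoc]

end Bessel

section CompactlySupportedSymbols

variable {d : ℕ} {f : ℝ → ℝ} {a : Q d × Q d → ℂ}

theorem Op_eq_integral_integral_ephase (ha : Continuous a) (hac : HasCompactSupport a) (t ℏ : ℝ)
    {u : Q d → ℂ} (hu : Continuous u) (huc : HasCompactSupport u) (q : Q d) :
    Op ℏ t a u q = ((2 * Real.pi * ℏ) ^ (d + 1) : ℝ)⁻¹ • ∫ q' : Q d,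
      (∫ p, a (t • q + (1 - t) • q', p) * ephase ℏ p (q - q')) * u q' := by
  rw [Op, integral_integral_swap]
  · simp only [integral_mul_const]
  · refine Continuous.integrable_of_hasCompactSupport (by fun_prop) <|
      .intro ((hac.isCompact.image continuous_snd).prod huc.isCompact) fun x hx ↦ ?_
    contrapose! hx
    have ha₀ := left_ne_zero_of_mul (left_ne_zero_of_mul hx)
    exact ⟨⟨_, subset_tsupport _ ha₀, rfl⟩, subset_tsupport _ (right_ne_zero_of_mul hx)⟩

theorem integral_integral_packet_mul (hf : Continuous f) (s t ℏ s' t' ℏ' : ℝ) (hs : s ^ 2 = 1)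
    (hs' : s' ^ 2 = 1) {B : PacketIndex d → ℂ} (hB : Integrable B) {u : Q d → ℂ}
    (hu : Integrable u) (q : Q d) :
    ∫ q', (∫ x, B x * (packet f s t ℏ x q * packet f s' t' ℏ' x q')) * u q'
      = ∫ x, B x * (∫ q', packet f s' t' ℏ' x q' * u q') * packet f s t ℏ x q := by
  have hpackets : Continuous fun y : Q d × PacketIndex d ↦
      packet f s t ℏ y.2 q * packet f s' t' ℏ' y.2 y.1 := by fun_prop
  have hInt : Integrable (fun y : Q d × PacketIndex d ↦
      u y.1 * B y.2 * (packet f s t ℏ y.2 q * packet f s' t' ℏ' y.2 y.1))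
      (volume.prod (volume.prod volume)) := by
    refine (hu.mul_prod hB).mul_bdd (c := 1) hpackets.aestronglyMeasurable (.of_forall fun y ↦ ?_)
    rw [norm_mul]
    exact mul_le_one₀ (norm_packet_le_one hs ..) (norm_nonneg _) (norm_packet_le_one hs' ..)
  calc ∫ q', (∫ x, B x * (packet f s t ℏ x q * packet f s' t' ℏ' x q')) * u q'
    _ = ∫ q', ∫ x, u q' * B x * (packet f s t ℏ x q * packet f s' t' ℏ' x q') := by
      simp only [← integral_mul_const, mul_right_comm _ _ (u _), mul_comm (u _)]
    _ = ∫ x, ∫ q', u q' * B x * (packet f s t ℏ x q * packet f s' t' ℏ' x q') :=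
      integral_integral_swap hInt
    _ = _ := by
      simp only [← integral_mul_const, ← integral_const_mul]
      congr! 4
      ring

theorem lintegral_enorm_integral_packetAmplitude_mul_sq_le {s s' : ℝ} (hs : s ^ 2 = 1)
    (hs' : s' ^ 2 = 1) (hf : Continuous f) (hf₀ : ∀ r, 0 < f r) (t t' : ℝ) {ℏ : ℝ} (hℏ : ℏ ≠ 0)
    {M : ℝ} (hM : HasScaledBound f (5 * (d + 1)) M a) (ha : ContDiff ℝ (⊤ : ℕ∞) a)
    (hac : HasCompactSupport a) {c : (Option (Fin d) → ℝ × ℝ) → ℂ} (hc : Integrable c)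
    {u : Q d → ℂ} (hu : Integrable u) (hu₂ : MemLp u 2) :
    ∫⁻ q, ‖∫ x, packetAmplitude f a c x * (∫ q', packet f s' t' (-ℏ) x q' * u q') *
        packet f s t ℏ x q‖ₑ ^ 2
      ≤ ENNReal.ofReal (2 ^ (5 * (d + 1)) * M * (∫ ω, ‖c ω‖) *
        ((2 * Real.pi * |ℏ|) ^ (d + 1) * Real.pi ^ (d + 1))) ^ 2 * ∫⁻ q, ‖u q‖ₑ ^ 2 := by
  have hB := integrable_packetAmplitude hf hf₀ ha hac hc
  have hU : AEStronglyMeasurable fun x ↦ ∫ q', packet f s' t' (-ℏ) x q' * u q' :=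
    aestronglyMeasurable_integral_packet_mul volume hf s' t' (-ℏ) hu continuous_id
  have hBU : Integrable fun x ↦
      packetAmplitude f a c x * ∫ q', packet f s' t' (-ℏ) x q' * u q' := by
    refine hB.mul_bdd (c := ∫ q, ‖u q‖) hU (.of_forall fun x ↦ ?_)
    refine norm_integral_le_of_norm_le hu.norm (.of_forall fun q ↦ ?_)
    rw [norm_mul]
    exact mul_le_of_le_one_left (norm_nonneg _) (norm_packet_le_one hs' ..)
  have hpacket : Continuous fun y : PacketIndex d × Q d ↦ packet f s t ℏ y.1 y.2 := by fun_prop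
  have hanalysis := lintegral_enorm_packetAmplitude_mul_sq_le hs' hf hf₀ t' (neg_ne_zero.2 hℏ)
    hM ha hc hu hu₂
  rw [abs_neg] at hanalysis
  rw [sq, mul_assoc]
  exact lintegral_enorm_integral_mul_sq_le hB.aestronglyMeasurable hU hBU
    hpacket.stronglyMeasurable (fun x q ↦ norm_packet_le_one hs t ℏ x q) hanalysis
    fun v hv hv₂ ↦ lintegral_enorm_packetAmplitude_mul_sq_le hs hf hf₀ t hℏ hM ha hc hv hv₂

theorem exists_lintegral_enorm_Op_sq_le (d : ℕ) : ∃ C > 0, ∀ f : ℝ → ℝ, Continuous f →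
    (∀ r, 0 < f r) → ∀ a : Q d × Q d → ℂ, ContDiff ℝ (⊤ : ℕ∞) a → HasCompactSupport a →
    ∀ M, HasScaledBound f (5 * (d + 1)) M a → ∀ t ∈ Set.Icc (0 : ℝ) 1, ∀ ℏ ∈ Set.Ioc (0 : ℝ) 1,
    ∀ u : Q d → ℂ, Continuous u → HasCompactSupport u →
      ∫⁻ q, ‖Op ℏ t a u q‖ₑ ^ 2 ≤ ENNReal.ofReal (C * M) ^ 2 * ∫⁻ q, ‖u q‖ₑ ^ 2 := by
  obtain ⟨C₀, hC₀⟩ := exists_integral_ephase_eq_integral_packet d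
  refine ⟨2 ^ (5 * (d + 1)) * (|C₀| + 1) * Real.pi ^ (d + 1), by positivity,
    fun f hf hf₀ a ha hac M hM t ht ℏ hℏ u hu huc ↦ ?_⟩
  obtain ⟨c, hc, hcC, hkernel⟩ := hC₀ t ht ℏ hℏ
  have hℏ₀ : 0 < ℏ := hℏ.1
  have hM₀ : 0 ≤ M := hM.nonneg
  have hu₁ : Integrable u := hu.integrable_of_hasCompactSupport huc
  have hOp (q : Q d) : Op ℏ t a u q = ((2 * Real.pi * ℏ) ^ (d + 1) : ℝ)⁻¹ •
      ∫ x, packetAmplitude f a c x * (∫ q', packet f (-1) (1 - t) (-ℏ) x q' * u q') *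
        packet f 1 t ℏ x q := by
    rw [Op_eq_integral_integral_ephase ha.continuous hac t ℏ hu huc]
    simp only [hkernel f hf hf₀ a ha hac]
    rw [integral_integral_packet_mul hf _ _ _ _ _ _ (by norm_num) (by norm_num)
      (integrable_packetAmplitude hf hf₀ ha hac hc) hu₁]
  have hnorm : ‖((2 * Real.pi * ℏ) ^ (d + 1) : ℝ)⁻¹‖ₑ
      = ENNReal.ofReal ((2 * Real.pi * ℏ) ^ (d + 1))⁻¹ :=
    Real.enorm_of_nonneg (by positivity)
  simp only [hOp, enorm_smul, hnorm, mul_pow (ENNReal.ofReal _)]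
  rw [lintegral_const_mul' _ _ (by finiteness)]
  grw [lintegral_enorm_integral_packetAmplitude_mul_sq_le (one_pow 2) (by norm_num) hf hf₀ t _
    hℏ₀.ne' hM ha hac hc hu₁ (hu.memLp_of_hasCompactSupport huc)]
  rw [← mul_assoc, ← mul_pow, ← ENNReal.ofReal_mul (by positivity), abs_of_pos hℏ₀]
  gcongr ENNReal.ofReal ?_ ^ 2 * _
  calc ((2 * Real.pi * ℏ) ^ (d + 1))⁻¹ * (2 ^ (5 * (d + 1)) * M * (∫ ω, ‖c ω‖) *
        ((2 * Real.pi * ℏ) ^ (d + 1) * Real.pi ^ (d + 1)))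
    _ = 2 ^ (5 * (d + 1)) * M * (∫ ω, ‖c ω‖) * Real.pi ^ (d + 1) := by field_simp
    _ ≤ 2 ^ (5 * (d + 1)) * M * (|C₀| + 1) * Real.pi ^ (d + 1) := by
      gcongr
      linarith [le_abs_self C₀]
    _ = _ := by ring

end CompactlySupportedSymbols

section SymbolBounds

theorem one_le_brF {d : ℕ} (f : ℝ → ℝ) (x : Q d × Q d) : 1 ≤ brF f x := by
  rw [brF, Real.one_le_sqrt, add_assoc]
  exact le_add_of_nonneg_right (by positivity)

theorem mem_idxSet {d N : ℕ} {α : MIdx d} : α ∈ idxSet d N ↔ deg α ≤ N := by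
  refine ⟨fun hα ↦ (mem_filter.1 hα).2, fun hα ↦ mem_filter.2 ⟨?_, hα⟩⟩
  simp only [mem_product, mem_range, Fintype.mem_piFinset, Nat.lt_succ_iff]
  rw [deg] at hα
  exact ⟨(Nat.le_add_right _ _).trans hα, fun i ↦
    (single_le_sum_of_canonicallyOrdered (mem_univ i)).trans ((Nat.le_add_left _ _).trans hα)⟩

variable {d : ℕ} {f : ℝ → ℝ} {m : ℝ} {a : Q d × Q d → ℂ}

/-- The weight of `∂_q^α ∂_p^β a` in the seminorms of `S^m_f`. -/
def symbolWeight (f : ℝ → ℝ) (m : ℝ) (α β : MIdx d) (x : Q d × Q d) : ℝ :=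
  f x.1.1 ^ (-(degA α : ℝ) + (degA β : ℝ)) * brF f x ^ (-m + (deg β : ℝ))

theorem symbolWeight_pos (hf₀ : ∀ r, 0 < f r) (m : ℝ) (α β : MIdx d) (x : Q d × Q d) :
    0 < symbolWeight f m α β x :=
  mul_pos (Real.rpow_pos_of_pos (hf₀ _) _)
    (Real.rpow_pos_of_pos (zero_lt_one.trans_le (one_le_brF f x)) _)

theorem bddAbove_range_symbolWeight_mul (hf₀ : ∀ r, 0 < f r) (ha : IsSymbol f m a) (α β : MIdx d) :
    BddAbove (Set.range fun x ↦ symbolWeight f m α β x * ‖mderiv2 α β a x‖) := by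
  obtain ⟨C, hC⟩ := ha.2 α β
  refine ⟨C, Set.forall_mem_range.2 fun x ↦ ?_⟩
  have hbr := zero_lt_one.trans_le (one_le_brF f x)
  have hcancel : symbolWeight f m α β x *
      (f x.1.1 ^ ((degA α : ℝ) - (degA β : ℝ)) * brF f x ^ (m - (deg β : ℝ))) = 1 := by
    rw [symbolWeight, mul_mul_mul_comm, ← Real.rpow_add (hf₀ _), ← Real.rpow_add hbr]
    ring_nf
    simp
  calc symbolWeight f m α β x * ‖mderiv2 α β a x‖
    _ ≤ symbolWeight f m α β x *
        (C * f x.1.1 ^ ((degA α : ℝ) - (degA β : ℝ)) * brF f x ^ (m - (deg β : ℝ))) :=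
      mul_le_mul_of_nonneg_left (hC x) (symbolWeight_pos hf₀ m α β x).le
    _ = C := by rw [mul_assoc C, mul_left_comm, hcancel, mul_one]

theorem symbolWeight_mul_norm_mderiv2_le_symNorm (hf₀ : ∀ r, 0 < f r) (ha : IsSymbol f m a)
    {N : ℕ} {α β : MIdx d} (hαβ : deg α + deg β ≤ N) (x : Q d × Q d) :
    symbolWeight f m α β x * ‖mderiv2 α β a x‖ ≤ symNorm f m N a := by
  set S : MIdx d → MIdx d → ℝ := fun α β ↦ if deg α + deg β ≤ N then
    ⨆ x, symbolWeight f m α β x * ‖mderiv2 α β a x‖ else 0 with hS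
  have hS₀ (α β : MIdx d) : 0 ≤ S α β := by
    simp only [hS]
    split_ifs
    · exact Real.iSup_nonneg fun x ↦
        mul_nonneg (symbolWeight_pos hf₀ m α β x).le (norm_nonneg _)
    · exact le_rfl
  have hα : α ∈ idxSet d N := mem_idxSet.2 ((Nat.le_add_right _ _).trans hαβ)
  have hβ : β ∈ idxSet d N := mem_idxSet.2 ((Nat.le_add_left _ _).trans hαβ)
  calc symbolWeight f m α β x * ‖mderiv2 α β a x‖
    _ ≤ ⨆ x, symbolWeight f m α β x * ‖mderiv2 α β a x‖ :=
      le_ciSup (bddAbove_range_symbolWeight_mul hf₀ ha α β) x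
    _ = S α β := (if_pos hαβ).symm
    _ ≤ ∑ β ∈ idxSet d N, S α β := single_le_sum (fun β _ ↦ hS₀ α β) hβ
    _ ≤ ∑ α ∈ idxSet d N, ∑ β ∈ idxSet d N, S α β :=
      single_le_sum (f := fun α ↦ ∑ β ∈ idxSet d N, S α β)
        (fun α _ ↦ sum_nonneg fun β _ ↦ hS₀ α β) hα
    _ = symNorm f m N a := rfl

/-- The word with `α` letters of each kind, the letters being numbered by `k`. -/
def multiIndexWord {κ : Type*} (k : Option (Fin d) → κ) (α : MIdx d) : List κ :=
  .replicate α.1 (k none) ++ (List.finRange d).flatMap fun i ↦ .replicate (α.2 i) (k (some i))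

theorem length_multiIndexWord {κ : Type*} (k : Option (Fin d) → κ) (α : MIdx d) :
    (multiIndexWord k α).length = deg α := by
  simp [multiIndexWord, deg, List.length_flatMap, Fin.sum_univ_def]

theorem map_multiIndexWord {κ κ' : Type*} (g : κ → κ') (k : Option (Fin d) → κ) (α : MIdx d) :
    (multiIndexWord k α).map g = multiIndexWord (g ∘ k) α := by
  simp [multiIndexWord, List.map_flatMap]

theorem prod_multiIndexWord {M : Type*} [CommMonoid M] (k : Option (Fin d) → M) (α : MIdx d) :
    (multiIndexWord k α).prod = k none ^ α.1 * ∏ i, k (some i) ^ α.2 i := by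
  simp [multiIndexWord, List.flatMap, List.prod_flatten, Function.comp_def, Fin.prod_univ_def]

theorem foldr_dirD_multiIndexWord {E : Type*} [NormedAddCommGroup E] [NormedSpace ℝ E]
    (v : Option (Fin d) → E) (α : MIdx d) (h : E → ℂ) :
    (multiIndexWord v α).foldr dirD h = (dirD (v none))^[α.1]
      ((List.finRange d).foldr (fun i h ↦ (dirD (v (some i)))^[α.2 i] h) h) := by
  have hreplicate (n : ℕ) (v : E) (h : E → ℂ) :
      (List.replicate n v).foldr dirD h = (dirD v)^[n] h := by
    induction n with
    | zero => rfl
    | succ n ih => rw [List.replicate_succ, List.foldr_cons, ih, Function.iterate_succ_apply']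
  simp [multiIndexWord, List.foldr_append, List.foldr_flatMap, hreplicate]

theorem mderiv2_eq_dirs (ha : ContDiff ℝ (⊤ : ℕ∞) a) (α β : MIdx d) :
    mderiv2 α β a
      = dirs ((multiIndexWord Sum.inl α ++ multiIndexWord Sum.inr β).map phaseDir) a := by
  rw [← dirs_perm ha (List.reverse_perm _), dirs, List.foldl_reverse, List.map_append,
    map_multiIndexWord, map_multiIndexWord, List.foldr_append, foldr_dirD_multiIndexWord,
    foldr_dirD_multiIndexWord]
  rfl

theorem exists_perm_multiIndexWord (l : List (Option (Fin d) ⊕ Option (Fin d))) :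
    ∃ α β : MIdx d, l.Perm (multiIndexWord Sum.inl α ++ multiIndexWord Sum.inr β) := by
  let : BEq (Option (Fin d) ⊕ Option (Fin d)) := instBEqOfDecidableEq
  refine ⟨(l.count (.inl none), fun i ↦ l.count (.inl (some i))),
    (l.count (.inr none), fun i ↦ l.count (.inr (some i))), List.perm_iff_count.2 ?_⟩
  rintro ((_ | i) | (_ | i)) <;>
    simp [multiIndexWord, List.count_flatMap, List.count_replicate, ← Fin.sum_univ_def]

theorem prod_phaseWeight_multiIndexWord {lam : ℝ} (hlam : 0 < lam) (α β : MIdx d) :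
    ((multiIndexWord Sum.inl α ++ multiIndexWord Sum.inr β).map (phaseWeight lam)).prod
      = lam ^ (-(degA α : ℝ) + (degA β : ℝ)) := by
  rw [Real.rpow_add hlam, Real.rpow_neg hlam.le, Real.rpow_natCast, Real.rpow_natCast,
    List.map_append, List.prod_append, map_multiIndexWord, map_multiIndexWord,
    prod_multiIndexWord, prod_multiIndexWord]
  simp [phaseWeight, prod_pow_eq_pow_sum, degA]

theorem hasScaledBound_of_isSymbol (hf₀ : ∀ r, 0 < f r) (ha : IsSymbol f 0 a) (N : ℕ) :
    HasScaledBound f N (symNorm f 0 N a) a := by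
  intro l hl x
  obtain ⟨α, β, hperm⟩ := exists_perm_multiIndexWord l
  have hdeg : deg α + deg β ≤ N := by
    rwa [hperm.length_eq, List.length_append, length_multiIndexWord, length_multiIndexWord] at hl
  rw [(hperm.map _).prod_eq, dirs_perm ha.1 (hperm.map _), ← mderiv2_eq_dirs ha.1,
    prod_phaseWeight_multiIndexWord (hf₀ _), norm_mul, Complex.norm_real,
    Real.norm_of_nonneg (by have := hf₀ x.1.1; positivity)]
  refine le_trans ?_ (symbolWeight_mul_norm_mderiv2_le_symNorm hf₀ ha hdeg x)
  gcongr
  exact le_mul_of_one_le_right (by have := hf₀ x.1.1; positivity)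
    (Real.one_le_rpow (one_le_brF f x) (by simp))

end SymbolBounds

section Cutoffs

open Filter Topology

section Leibniz

variable {E F : Type*} [NormedAddCommGroup E] [NormedSpace ℝ E] [NormedAddCommGroup F]
  [NormedSpace ℝ F]

theorem norm_dirs_mul_le {g h : E → ℂ} (hg : ContDiff ℝ (⊤ : ℕ∞) g) (hh : ContDiff ℝ (⊤ : ℕ∞) h)
    {l : List E} {x : E} {M M' : ℝ} (hM : ∀ s, s.Sublist l → ‖dirs s g x‖ ≤ M)
    (hM' : ∀ s, s.Sublist l → ‖dirs s h x‖ ≤ M') :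
    ‖dirs l (fun x ↦ g x * h x) x‖ ≤ 2 ^ l.length * (M * M') := by
  induction l generalizing g h with
  | nil =>
    have hg₀ := hM [] .slnil
    have hh₀ := hM' [] .slnil
    rw [List.length_nil, pow_zero, one_mul]
    exact (norm_mul_le _ _).trans (mul_le_mul hg₀ hh₀ (norm_nonneg _) ((norm_nonneg _).trans hg₀))
  | cons v l ih =>
    have hleft := ih (contDiff_dirD hg v) hh (fun s hs ↦ hM (v :: s) (hs.cons_cons v))
      fun s hs ↦ hM' s (hs.cons v)
    have hright := ih hg (contDiff_dirD hh v) (fun s hs ↦ hM s (hs.cons v))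
      fun s hs ↦ hM' (v :: s) (hs.cons_cons v)
    have hsplit : dirs (v :: l) (fun x ↦ g x * h x) x
        = dirs l (fun x ↦ dirD v g x * h x) x + dirs l (fun x ↦ g x * dirD v h x) x := by
      rw [dirs, List.foldl_cons, ← dirs, dirD_mul (hg.differentiable (by simp))
        (hh.differentiable (by simp)), dirs_add ((contDiff_dirD hg v).mul hh)
        (hg.mul (contDiff_dirD hh v))]
    rw [hsplit, List.length_cons, pow_succ]
    linarith [norm_add_le (dirs l (fun x ↦ dirD v g x * h x) x)
      (dirs l (fun x ↦ g x * dirD v h x) x)]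

theorem dirs_comp_continuousLinearMap {h : F → ℂ} (hh : ContDiff ℝ (⊤ : ℕ∞) h) (L : E →L[ℝ] F)
    (l : List E) : dirs l (fun x ↦ h (L x)) = fun x ↦ dirs (l.map L) h (L x) := by
  induction l generalizing h with
  | nil => rfl
  | cons v l ih =>
    have hchain : dirD v (fun x ↦ h (L x)) = fun x ↦ dirD (L v) h (L x) := by
      ext x
      have hcomp := ((hh.differentiable (by simp)) (L x)).hasFDerivAt.comp x L.hasFDerivAt
      exact congrArg (fun T : E →L[ℝ] ℂ ↦ T v) hcomp.fderiv
    simp only [dirs, List.foldl_cons, List.map_cons] at ih ⊢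
    rw [hchain, ih (contDiff_dirD hh (L v))]

theorem exists_forall_norm_dirs_le {κ : Type*} [Finite κ] (e : κ → E) {h : E → ℂ}
    (hh : ContDiff ℝ (⊤ : ℕ∞) h) (hc : HasCompactSupport h) (N : ℕ) :
    ∃ C, ∀ l : List κ, l.length ≤ N → ∀ x, ‖dirs (l.map e) h x‖ ≤ C := by
  choose C hC using fun l : List κ ↦
    (hasCompactSupport_dirs hc (l.map e)).exists_bound_of_continuous (contDiff_dirs hh _).continuous
  obtain ⟨B, hB⟩ := ((List.finite_length_le κ N).image C).bddAbove
  exact ⟨B, fun l hl x ↦ (hC l x).trans (hB ⟨l, hl, rfl⟩)⟩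

end Leibniz

variable {d : ℕ} {f : ℝ → ℝ} {a b : Q d × Q d → ℂ}

theorem HasScaledBound.mul {N : ℕ} {M M' : ℝ} (hM : HasScaledBound f N M a)
    (hM' : HasScaledBound f N M' b) (ha : ContDiff ℝ (⊤ : ℕ∞) a) (hb : ContDiff ℝ (⊤ : ℕ∞) b) :
    HasScaledBound f N (2 ^ N * (M * M')) fun x ↦ a x * b x := by
  intro l hl x
  have habsorb {g : Q d × Q d → ℂ} (hg : ContDiff ℝ (⊤ : ℕ∞) g)
      (l : List (Option (Fin d) ⊕ Option (Fin d))) :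
      ((l.map (phaseWeight (f x.1.1))).prod : ℂ) * dirs (l.map phaseDir) g x
        = dirs (l.map fun k ↦ phaseWeight (f x.1.1) k • phaseDir k) g x :=
    (congrFun (dirs_map_smul hg _ _ l) x).symm
  have hsub {g : Q d × Q d → ℂ} (hg : ContDiff ℝ (⊤ : ℕ∞) g) {K : ℝ}
      (hK : HasScaledBound f N K g) (s : List (Q d × Q d))
      (hs : s.Sublist (l.map fun k ↦ phaseWeight (f x.1.1) k • phaseDir k)) :
      ‖dirs s g x‖ ≤ K := by
    obtain ⟨l', hl', rfl⟩ := List.sublist_map_iff.1 hs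
    rw [← habsorb hg]
    exact hK l' (hl'.length_le.trans hl) x
  rw [habsorb (ha.mul hb)]
  refine (norm_dirs_mul_le ha hb (hsub ha hM) (hsub hb hM')).trans ?_
  rw [List.length_map]
  gcongr
  · exact mul_nonneg hM.nonneg hM'.nonneg
  · exact one_le_two

/-- The phase-space dilation `(r, θ, p) ↦ (δ r, ε θ, ε p)`. -/
def dilation (δ ε : ℝ) : Q d × Q d →L[ℝ] Q d × Q d :=
  ((δ • ContinuousLinearMap.id ℝ ℝ).prodMap (ε • ContinuousLinearMap.id ℝ (Fin d → ℝ))).prodMap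
    (ε • ContinuousLinearMap.id ℝ (Q d))

theorem dilation_apply (δ ε : ℝ) (x : Q d × Q d) :
    dilation δ ε x = ((δ * x.1.1, ε • x.1.2), ε • x.2) :=
  rfl

/-- The eigenvalues of `dilation δ ε`. -/
def dilationScale (δ ε : ℝ) : Option (Fin d) ⊕ Option (Fin d) → ℝ
  | .inl none => δ
  | _ => ε

theorem dilation_phaseDir (δ ε : ℝ) (k : Option (Fin d) ⊕ Option (Fin d)) :
    dilation δ ε (phaseDir k) = dilationScale δ ε k • phaseDir k := by
  rcases k with (_ | i) | (_ | i) <;>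
    simp [dilation_apply, dilationScale, phaseDir, coordDir, eR, eTh]

theorem norm_phaseWeight_mul_dilationScale_le_one {δ ε lam : ℝ} (hδ₀ : 0 ≤ δ) (hδ₁ : δ ≤ 1)
    (hε₀ : 0 < ε) (hlam : ε ≤ lam) (hlam' : ε * lam ≤ 1)
    (k : Option (Fin d) ⊕ Option (Fin d)) : ‖phaseWeight lam k * dilationScale δ ε k‖ ≤ 1 := by
  have hlam₀ : 0 < lam := hε₀.trans_le hlam
  have hε₁ : ε ≤ 1 := by nlinarith
  rw [Real.norm_eq_abs]
  rcases k with (_ | i) | (_ | i)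
  · simpa [phaseWeight, dilationScale, abs_of_nonneg hδ₀] using hδ₁
  · simpa [phaseWeight, dilationScale, abs_of_pos hε₀, abs_of_pos hlam₀, inv_mul_le_iff₀ hlam₀]
      using hlam
  · simpa [phaseWeight, dilationScale, abs_of_pos hε₀] using hε₁
  · simpa [phaseWeight, dilationScale, abs_of_pos hε₀, abs_of_pos hlam₀, mul_comm] using hlam'

/-- A smooth bump on `ℝ × ℝ^d`, equal to `1` on the unit ball. -/
def unitBump (d : ℕ) : ContDiffBump (0 : Q d) := ⟨1, 2, one_pos, one_lt_two⟩

/-- A smooth bump on phase space, a product of bumps in position and momentum. -/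
def unitCutoff (d : ℕ) (x : Q d × Q d) : ℂ := unitBump d x.1 * unitBump d x.2

theorem contDiff_unitCutoff (d : ℕ) : ContDiff ℝ (⊤ : ℕ∞) (unitCutoff d) :=
  .mul (Complex.ofRealCLM.contDiff.comp ((unitBump d).contDiff.comp contDiff_fst))
    (Complex.ofRealCLM.contDiff.comp ((unitBump d).contDiff.comp contDiff_snd))

theorem mem_closedBall_of_unitCutoff_ne_zero {x : Q d × Q d} (hx : unitCutoff d x ≠ 0) :
    x ∈ Metric.closedBall (0 : Q d) 2 ×ˢ Metric.closedBall (0 : Q d) 2 := by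
  have hball {q : Q d} (hq : (unitBump d q : ℂ) ≠ 0) : q ∈ Metric.closedBall (0 : Q d) 2 :=
    Metric.ball_subset_closedBall <| (unitBump d).support_eq ▸ Complex.ofReal_ne_zero.1 hq
  exact ⟨hball (left_ne_zero_of_mul hx), hball (right_ne_zero_of_mul hx)⟩

theorem hasCompactSupport_unitCutoff (d : ℕ) : HasCompactSupport (unitCutoff d) :=
  .of_support_subset_isCompact ((isCompact_closedBall _ _).prod (isCompact_closedBall _ _))
    fun _ ↦ mem_closedBall_of_unitCutoff_ne_zero

theorem contDiff_unitCutoff_dilation (δ ε : ℝ) :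
    ContDiff ℝ (⊤ : ℕ∞) fun x : Q d × Q d ↦ unitCutoff d (dilation δ ε x) :=
  (contDiff_unitCutoff d).comp (dilation δ ε).contDiff

theorem hasCompactSupport_unitCutoff_dilation {δ ε : ℝ} (hδ : δ ≠ 0) (hε : ε ≠ 0) :
    HasCompactSupport fun x : Q d × Q d ↦ unitCutoff d (dilation δ ε x) := by
  refine (hasCompactSupport_unitCutoff d).comp_isClosedEmbedding (g := dilation δ ε)
    (Function.LeftInverse.isClosedEmbedding (f := dilation δ⁻¹ ε⁻¹) (fun x ↦ ?_)
      (dilation _ _).continuous (dilation δ ε).continuous)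
  simp [dilation_apply, smul_smul, hδ, hε]

theorem exists_hasScaledBound_unitCutoff_dilation (d N : ℕ) : ∃ C, ∀ (f : ℝ → ℝ) (δ ε : ℝ),
    0 ≤ δ → δ ≤ 1 → 0 < ε → (∀ r, |δ * r| ≤ 2 → ε ≤ f r ∧ ε * f r ≤ 1) →
      HasScaledBound f N C fun x : Q d × Q d ↦ unitCutoff d (dilation δ ε x) := by
  obtain ⟨C, hC⟩ := exists_forall_norm_dirs_le (phaseDir (d := d)) (contDiff_unitCutoff d)
    (hasCompactSupport_unitCutoff d) N
  refine ⟨C, fun f δ ε hδ₀ hδ₁ hε₀ hf l hl x ↦ ?_⟩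
  have hC₀ : 0 ≤ C := (norm_nonneg _).trans (hC l hl (dilation δ ε x))
  rw [dirs_comp_continuousLinearMap (contDiff_unitCutoff d), List.map_map]
  simp only [Function.comp_def, dilation_phaseDir, dirs_map_smul (contDiff_unitCutoff d)]
  by_cases hx : dirs (l.map phaseDir) (unitCutoff d) (dilation δ ε x) = 0
  · simpa only [hx, mul_zero, norm_zero] using hC₀
  have hr : |δ * x.1.1| ≤ 2 := by
    have hsupp : tsupport (unitCutoff d) ⊆ Metric.closedBall 0 2 ×ˢ Metric.closedBall 0 2 :=
      closure_minimal (fun _ ↦ mem_closedBall_of_unitCutoff_ne_zero)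
        (Metric.isClosed_closedBall.prod Metric.isClosed_closedBall)
    have hpos := (hsupp (tsupport_dirs_subset _ _ (subset_tsupport _ hx))).1
    exact (norm_fst_le _).trans (mem_closedBall_zero_iff.1 hpos)
  obtain ⟨hεf, hεf'⟩ := hf _ hr
  have hprod : ‖(l.map fun k ↦ phaseWeight (f x.1.1) k * dilationScale δ ε k).prod‖ ≤ 1 := by
    clear hl hx
    induction l with
    | nil => simp
    | cons k l ih =>
      rw [List.map_cons, List.prod_cons, norm_mul]
      exact mul_le_one₀ (norm_phaseWeight_mul_dilationScale_le_one hδ₀ hδ₁ hε₀ hεf hεf' k)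
        (norm_nonneg _) ih
  rw [← mul_assoc, ← Complex.ofReal_mul, ← List.prod_map_mul, norm_mul, Complex.norm_real]
  exact (mul_le_of_le_one_left (norm_nonneg _) hprod).trans (hC l hl _)

theorem exists_dilation_parameter (hf : Continuous f) (hf₀ : ∀ r, 0 < f r) {δ : ℝ} (hδ : 0 < δ) :
    ∃ ε > 0, ε ≤ δ ∧ ∀ r, |δ * r| ≤ 2 → ε ≤ f r ∧ ε * f r ≤ 1 := by
  obtain ⟨ε, hε₀, hε⟩ := (isCompact_closedBall (0 : ℝ) (2 / δ)).exists_forall_le'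
    (f := fun r ↦ min (f r) (1 / f r)) (a := 0)
    (hf.min (continuous_const.div hf fun r ↦ (hf₀ r).ne')).continuousOn
    fun r _ ↦ lt_min (hf₀ r) (one_div_pos.2 (hf₀ r))
  refine ⟨min ε δ, lt_min hε₀ hδ, min_le_right _ _, fun r hr ↦ ?_⟩
  have hr' : r ∈ Metric.closedBall (0 : ℝ) (2 / δ) := by
    rwa [mem_closedBall_zero_iff, Real.norm_eq_abs, le_div_iff₀' hδ, ← abs_of_pos hδ, ← abs_mul]
  have hmin := (min_le_left ε δ).trans (hε r hr')
  exact ⟨hmin.trans (min_le_left _ _),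
    (le_div_iff₀ (hf₀ r)).1 (hmin.trans (min_le_right _ _))⟩

theorem exists_tendsto_dilation_parameters (hf : Continuous f) (hf₀ : ∀ r, 0 < f r) :
    ∃ δ ε : ℕ → ℝ, Tendsto δ atTop (𝓝 0) ∧ Tendsto ε atTop (𝓝 0) ∧ ∀ k,
      0 < δ k ∧ δ k ≤ 1 ∧ 0 < ε k ∧ ∀ r, |δ k * r| ≤ 2 → ε k ≤ f r ∧ ε k * f r ≤ 1 := by
  have hδ₀ (k : ℕ) : (0 : ℝ) < 1 / (k + 1) := Nat.one_div_pos_of_nat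
  have hδ₁ (k : ℕ) : (1 : ℝ) / (k + 1) ≤ 1 := by
    simpa using Nat.one_div_le_one_div (α := ℝ) (Nat.zero_le k)
  have hδ : Tendsto (fun k : ℕ ↦ (1 : ℝ) / (k + 1)) atTop (𝓝 0) :=
    tendsto_one_div_add_atTop_nhds_zero_nat
  choose ε hε₀ hεδ hε using fun k ↦ exists_dilation_parameter hf hf₀ (hδ₀ k)
  exact ⟨_, ε, hδ, squeeze_zero (fun k ↦ (hε₀ k).le) hεδ hδ,
    fun k ↦ ⟨hδ₀ k, hδ₁ k, hε₀ k, hε k⟩⟩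

end Cutoffs

section SymbolLimit

open Filter Topology

variable {d : ℕ} {a : Q d × Q d → ℂ}

theorem measurable_Op (ha : Continuous a) (t ℏ : ℝ) {u : Q d → ℂ} (hu : Continuous u) :
    Measurable (Op ℏ t a u) := by
  have hintegrand : Continuous fun x : (Q d × Q d) × Q d ↦
      a (t • x.1.1 + (1 - t) • x.2, x.1.2) * ephase ℏ x.1.2 (x.1.1 - x.2) * u x.2 := by fun_prop
  have hintegral := hintegrand.stronglyMeasurable.integral_prod_right'
    (ν := (volume : Measure (Q d)))
  exact (hintegral.integral_prod_right' (ν := (volume : Measure (Q d)))).measurable.const_smul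
    ((2 * Real.pi * ℏ) ^ (d + 1) : ℝ)⁻¹

theorem tendsto_integral_unitBump_smul_mul {g : Q d → ℂ} (hg : Integrable g) {ε : ℕ → ℝ}
    (hε : Tendsto ε atTop (𝓝 0)) :
    Tendsto (fun k ↦ ∫ p, (unitBump d (ε k • p) : ℂ) * g p) atTop (𝓝 (∫ p, g p)) := by
  refine tendsto_integral_of_dominated_convergence (fun p ↦ ‖g p‖) (fun k ↦ ?_) hg.norm
    (fun k ↦ .of_forall fun p ↦ ?_) (.of_forall fun p ↦ ?_)
  · have hbump : Continuous fun p : Q d ↦ (unitBump d (ε k • p) : ℂ) :=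
      Complex.continuous_ofReal.comp ((unitBump d).continuous.comp (continuous_const_smul _))
    exact hbump.aestronglyMeasurable.mul hg.aestronglyMeasurable
  · rw [norm_mul, Complex.norm_real, Real.norm_of_nonneg (unitBump d).nonneg]
    exact mul_le_of_le_one_left (norm_nonneg _) (unitBump d).le_one
  · have hzero : Tendsto (fun k ↦ ε k • p) atTop (𝓝 0) := by simpa using hε.smul_const p
    refine tendsto_const_nhds.congr' ?_
    filter_upwards [hzero.eventually (unitBump d).eventuallyEq_one] with k hk
    simp [hk]

theorem tendsto_Op_mul_unitCutoff_dilation (a : Q d × Q d → ℂ) (t ℏ : ℝ) {u : Q d → ℂ}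
    (huc : HasCompactSupport u) {δ ε : ℕ → ℝ} (hδ : Tendsto δ atTop (𝓝 0))
    (hε : Tendsto ε atTop (𝓝 0)) {q : Q d} (hInt : Integrable fun p : Q d ↦
      ∫ q' : Q d, a (t • q + (1 - t) • q', p) * ephase ℏ p (q - q') * u q') :
    Tendsto (fun k ↦ Op ℏ t (fun x ↦ a x * unitCutoff d (dilation (δ k) (ε k) x)) u q) atTop
      (𝓝 (Op ℏ t a u q)) := by
  have hball : ∀ᶠ k in atTop, ∀ q' ∈ tsupport u,
      unitBump d (δ k * (t • q + (1 - t) • q').1, ε k • (t • q + (1 - t) • q').2) = 1 := by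
    have hcont : Continuous fun z : (ℝ × ℝ) × Q d ↦
        (z.1.1 * (t • q + (1 - t) • z.2).1, z.1.2 • (t • q + (1 - t) • z.2).2) := by fun_prop
    have hnear := huc.isCompact.eventually_forall_of_forall_eventually (x₀ := ((0 : ℝ), (0 : ℝ)))
      (P := fun z q' ↦
        unitBump d (z.1 * (t • q + (1 - t) • q').1, z.2 • (t • q + (1 - t) • q').2) = 1)
      fun q' _ ↦ (hcont.tendsto' _ 0 (by simp)).eventually (unitBump d).eventuallyEq_one
    exact (hδ.prodMk_nhds hε).eventually hnear
  refine ((tendsto_integral_unitBump_smul_mul hInt hε).const_smul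
    ((2 * Real.pi * ℏ) ^ (d + 1) : ℝ)⁻¹).congr' ?_
  filter_upwards [hball] with k hk
  simp only [Op, ← integral_const_mul]
  congr 2 with p
  congr 1 with q'
  by_cases hq' : u q' = 0
  · simp [hq']
  · rw [unitCutoff, dilation_apply, hk q' (subset_tsupport _ hq')]
    push_cast
    ring

theorem enorm_Op_sq_le_liminf (a : Q d × Q d → ℂ) (t ℏ : ℝ) {u : Q d → ℂ}
    (huc : HasCompactSupport u) {δ ε : ℕ → ℝ} (hδ : Tendsto δ atTop (𝓝 0))
    (hε : Tendsto ε atTop (𝓝 0)) (q : Q d) :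
    ‖Op ℏ t a u q‖ₑ ^ 2 ≤ liminf (fun k ↦
      ‖Op ℏ t (fun x ↦ a x * unitCutoff d (dilation (δ k) (ε k) x)) u q‖ₑ ^ 2) atTop := by
  by_cases hInt : Integrable fun p : Q d ↦
      ∫ q' : Q d, a (t • q + (1 - t) • q', p) * ephase ℏ p (q - q') * u q'
  · have hlim := tendsto_Op_mul_unitCutoff_dilation a t ℏ huc hδ hε hInt
    exact (ENNReal.Tendsto.pow (n := 2) hlim.enorm).liminf_eq.ge
  · simp [Op, integral_undef hInt]

theorem exists_lintegral_enorm_Op_sq_le_symNorm (d : ℕ) : ∃ C > 0, ∀ f : ℝ → ℝ, Continuous f →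
    (∀ r, 0 < f r) → ∀ a : Q d × Q d → ℂ, IsSymbol f 0 a → ∀ t ∈ Set.Icc (0 : ℝ) 1,
    ∀ ℏ ∈ Set.Ioc (0 : ℝ) 1, ∀ u : Q d → ℂ, Continuous u → HasCompactSupport u →
      ∫⁻ q, ‖Op ℏ t a u q‖ₑ ^ 2
        ≤ ENNReal.ofReal (C * symNorm f 0 (5 * (d + 1)) a) ^ 2 * ∫⁻ q, ‖u q‖ₑ ^ 2 := by
  set N := 5 * (d + 1)
  obtain ⟨C, hC₀, hC⟩ := exists_lintegral_enorm_Op_sq_le d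
  obtain ⟨K, hK⟩ := exists_hasScaledBound_unitCutoff_dilation d N
  refine ⟨C * (2 ^ N * (|K| + 1)), by positivity, fun f hf hf₀ a ha t ht ℏ hℏ u hu huc ↦ ?_⟩
  have hM := hasScaledBound_of_isSymbol hf₀ ha N
  set M := symNorm f 0 N a
  obtain ⟨δ, ε, hδ, hε, hδε⟩ := exists_tendsto_dilation_parameters hf hf₀
  set b : ℕ → Q d × Q d → ℂ := fun k x ↦ a x * unitCutoff d (dilation (δ k) (ε k) x)
  have hb (k : ℕ) : ContDiff ℝ (⊤ : ℕ∞) (b k) := ha.1.mul (contDiff_unitCutoff_dilation _ _)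
  have hbound (k : ℕ) : ∫⁻ q, ‖Op ℏ t (b k) u q‖ₑ ^ 2
      ≤ ENNReal.ofReal (C * (2 ^ N * (M * K))) ^ 2 * ∫⁻ q, ‖u q‖ₑ ^ 2 := by
    obtain ⟨hδ₀, hδ₁, hε₀, hfε⟩ := hδε k
    have hcutoff := hK f (δ k) (ε k) hδ₀.le hδ₁ hε₀ hfε
    exact hC f hf hf₀ (b k) (hb k)
      (hasCompactSupport_unitCutoff_dilation hδ₀.ne' hε₀.ne').mul_left _
      (hM.mul hcutoff ha.1 (contDiff_unitCutoff_dilation _ _)) t ht ℏ hℏ u hu huc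
  calc ∫⁻ q, ‖Op ℏ t a u q‖ₑ ^ 2
    _ ≤ ∫⁻ q, liminf (fun k ↦ ‖Op ℏ t (b k) u q‖ₑ ^ 2) atTop :=
      lintegral_mono fun q ↦ enorm_Op_sq_le_liminf a t ℏ huc hδ hε q
    _ ≤ liminf (fun k ↦ ∫⁻ q, ‖Op ℏ t (b k) u q‖ₑ ^ 2) atTop :=
      lintegral_liminf_le fun k ↦ (measurable_Op (hb k).continuous t ℏ hu).enorm.pow_const 2
    _ ≤ ENNReal.ofReal (C * (2 ^ N * (M * K))) ^ 2 * ∫⁻ q, ‖u q‖ₑ ^ 2 :=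
      liminf_le_of_frequently_le' (.of_forall hbound)
    _ ≤ _ := by
      gcongr ENNReal.ofReal ?_ ^ 2 * _
      have hKM : M * K ≤ (|K| + 1) * M := by
        nlinarith [hM.nonneg, le_abs_self K]
      calc C * (2 ^ N * (M * K)) ≤ C * (2 ^ N * ((|K| + 1) * M)) := by gcongr
        _ = _ := by ring

theorem l2norm_nonneg (u : Q d → ℂ) : 0 ≤ l2norm u :=
  Real.rpow_nonneg (integral_nonneg fun q ↦ by positivity) _

theorem l2norm_sq (u : Q d → ℂ) : l2norm u ^ 2 = ∫ q, ‖u q‖ ^ 2 := by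
  rw [l2norm, ← Real.sqrt_eq_rpow, Real.sq_sqrt (integral_nonneg fun q ↦ by positivity)]

theorem lintegral_enorm_sq_eq_ofReal_l2norm_sq {u : Q d → ℂ}
    (hu : Integrable fun q ↦ ‖u q‖ ^ 2) : ∫⁻ q, ‖u q‖ₑ ^ 2 = ENNReal.ofReal (l2norm u ^ 2) := by
  rw [l2norm_sq, ofReal_integral_eq_lintegral_ofReal hu (.of_forall fun q ↦ by positivity)]
  simp only [ENNReal.ofReal_pow (norm_nonneg _), ofReal_norm]

theorem l2norm_le_of_lintegral_enorm_sq_le {g u : Q d → ℂ}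
    (hu : Integrable fun q ↦ ‖u q‖ ^ 2) {K : ℝ} (hK : 0 ≤ K)
    (hgu : ∫⁻ q, ‖g q‖ₑ ^ 2 ≤ ENNReal.ofReal K ^ 2 * ∫⁻ q, ‖u q‖ₑ ^ 2) :
    l2norm g ≤ K * l2norm u := by
  by_cases hg : Integrable fun q ↦ ‖g q‖ ^ 2
  · rw [lintegral_enorm_sq_eq_ofReal_l2norm_sq hg, lintegral_enorm_sq_eq_ofReal_l2norm_sq hu,
      ← ENNReal.ofReal_pow hK, ← ENNReal.ofReal_mul (by positivity), ← mul_pow,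
      ENNReal.ofReal_le_ofReal_iff (by positivity)] at hgu
    exact le_of_sq_le_sq hgu (mul_nonneg hK (l2norm_nonneg u))
  · have hzero : l2norm g = 0 := by simp [l2norm, integral_undef hg]
    exact hzero.trans_le (mul_nonneg hK (l2norm_nonneg u))

end SymbolLimit

end CalderonVaillancourt

open CalderonVaillancourt in
theorem statement6_general (d : ℕ) :
    ∃ C > (0 : ℝ), ∃ N : ℕ, ∀ f : ℝ → ℝ, Continuous f → (∀ r, 0 < f r) →
      ∀ a : Q d × Q d → ℂ, IsSymbol f 0 a → ∀ t ∈ Set.Icc (0 : ℝ) 1, ∀ ℏ ∈ Set.Ioc (0 : ℝ) 1,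
        ∀ u : Q d → ℂ, Continuous u → HasCompactSupport u →
          l2norm (Op ℏ t a u) ≤ C * symNorm f 0 N a * l2norm u := by
  obtain ⟨C, hC, hbound⟩ := exists_lintegral_enorm_Op_sq_le_symNorm d
  refine ⟨C, hC, 5 * (d + 1), fun f hf hf₀ a ha t ht ℏ hℏ u hu huc ↦ ?_⟩
  have hu₂ : Integrable fun q ↦ ‖u q‖ ^ 2 :=
    (hu.memLp_of_hasCompactSupport (p := 2) huc).integrable_norm_pow (by norm_num)
  have hnorm : 0 ≤ symNorm f 0 (5 * (d + 1)) a :=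
    (hasScaledBound_of_isSymbol hf₀ ha (5 * (d + 1))).nonneg
  exact l2norm_le_of_lintegral_enorm_sq_le hu₂ (mul_nonneg hC.le hnorm)
    (hbound f hf hf₀ a ha t ht ℏ hℏ u hu huc)

/-- Calderón–Vaillancourt type `L²` boundedness theorem. -/
theorem statement6 (d : ℕ) (f : ℝ → ℝ) (hf : GoodF f) :
    ∃ C > (0 : ℝ), ∃ N : ℕ, ∀ a : Q d × Q d → ℂ, IsSymbol f 0 a →
      ∀ t ∈ Set.Icc (0 : ℝ) 1, ∀ ℏ ∈ Set.Ioc (0 : ℝ) 1, ∀ u : Q d → ℂ, IsCc u →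
        l2norm (Op ℏ t a u) ≤ C * symNorm f 0 N a * l2norm u := by
  obtain ⟨C, hC, N, hbound⟩ := statement6_general d
  exact ⟨C, hC, N, fun a ha t ht ℏ hℏ u hu ↦ hbound f hf.1.continuous
    (fun r ↦ zero_lt_one.trans_le (hf.2.1 r)) a ha t ht ℏ hℏ u hu.1.continuous hu.2⟩

end
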